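/- The 3p − 1 symmetric linear forms χ^+_s, χ^−_s (1 ≤ s ≤ p) and G_{s′} (1 ≤ s′ ≤ p−1) form a basis of SLF(Ū_q); in particular dim SLF(Ū_q) = 3p − 1. -/

import Mathlib

noncomputable section

open scoped TensorProduct

namespace Uqsl2

/-- Generators of the restricted quantum group. -/
inductive gen : Type | E | F | K | Kinv

/-- The primitive `2p`-th root of unity `q = e^{iπ/p}`. -/
def q (p : ℕ) : ℂ := Complex.exp (Real.pi * Complex.I / p)

/-- The `q`-integer `[n] = (q^n - q^{-n})/(q - q^{-1})`. -/
def qi (p : ℕ) (n : ℤ) : ℂ := (q p ^ n - q p ^ (-n)) / (q p - (q p)⁻¹)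

/-- The `q`-factorial `[m]!`. -/
def qfact (p m : ℕ) : ℂ := ∏ i ∈ Finset.range m, qi p (i + 1)

open FreeAlgebra in
/-- The defining relations of `Ū_q(sl₂)`. -/
inductive rel (p : ℕ) : FreeAlgebra ℂ gen → FreeAlgebra ℂ gen → Prop
  | KKinv : rel p (ι ℂ gen.K * ι ℂ gen.Kinv) 1
  | KinvK : rel p (ι ℂ gen.Kinv * ι ℂ gen.K) 1
  | Ep : rel p (ι ℂ gen.E ^ p) 0
  | Fp : rel p (ι ℂ gen.F ^ p) 0
  | K2p : rel p (ι ℂ gen.K ^ (2 * p)) 1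
  | KE : rel p (ι ℂ gen.K * ι ℂ gen.E) (q p ^ 2 • (ι ℂ gen.E * ι ℂ gen.K))
  | KF : rel p (ι ℂ gen.K * ι ℂ gen.F) ((q p ^ 2)⁻¹ • (ι ℂ gen.F * ι ℂ gen.K))
  | EF : rel p (ι ℂ gen.E * ι ℂ gen.F - ι ℂ gen.F * ι ℂ gen.E)
             ((q p - (q p)⁻¹)⁻¹ • (ι ℂ gen.K - ι ℂ gen.Kinv))

/-- The restricted quantum group `Ū_q(sl₂)`, presented by generators and relations. -/
abbrev Uq (p : ℕ) := RingQuot (rel p)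

def EE (p : ℕ) : Uq p := RingQuot.mkAlgHom ℂ (rel p) (FreeAlgebra.ι ℂ gen.E)
def FF (p : ℕ) : Uq p := RingQuot.mkAlgHom ℂ (rel p) (FreeAlgebra.ι ℂ gen.F)
def KK (p : ℕ) : Uq p := RingQuot.mkAlgHom ℂ (rel p) (FreeAlgebra.ι ℂ gen.K)
def KKinv (p : ℕ) : Uq p := RingQuot.mkAlgHom ℂ (rel p) (FreeAlgebra.ι ℂ gen.Kinv)

/-! ### The simple modules `X^α(s)` as matrix representations -/

/-- Matrix of `K` on `X^α(s)` in the canonical basis. -/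
def XK (p : ℕ) (α : ℂ) (s : ℕ) : Matrix (Fin s) (Fin s) ℂ :=
  Matrix.diagonal fun i => α * q p ^ ((s : ℤ) - 1 - 2 * (i : ℕ))

/-- Matrix of `E` on `X^α(s)` in the canonical basis. -/
def XE (p : ℕ) (α : ℂ) (s : ℕ) : Matrix (Fin s) (Fin s) ℂ :=
  Matrix.of fun i j =>
    if (i : ℕ) + 1 = (j : ℕ) then α * qi p (j : ℕ) * qi p ((s : ℤ) - (j : ℕ)) else 0

/-- Matrix of `F` on `X^α(s)` in the canonical basis. -/
def XF (s : ℕ) : Matrix (Fin s) (Fin s) ℂ :=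
  Matrix.of fun i j => if (i : ℕ) = (j : ℕ) + 1 then (1 : ℂ) else 0

/-- The statement that `ρX α s` is the representation on `X^α(s)` for the relevant
values of `α` and `s`. -/
def IsXRep (p : ℕ) (ρX : (α : ℂ) → (s : ℕ) → (Uq p →ₐ[ℂ] Matrix (Fin s) (Fin s) ℂ)) : Prop :=
  ∀ α : ℂ, (α = 1 ∨ α = -1) → ∀ s : ℕ, 1 ≤ s → s ≤ p →
    ρX α s (KK p) = XK p α s ∧ ρX α s (EE p) = XE p α s ∧ ρX α s (FF p) = XF s

/-! ### The projective modules `P^α(s)` as matrix representations -/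

/-- Index for the standard basis `(b_i, x_j, y_k, a_l)` of `P^α(s)`. -/
abbrev PIdx (p s : ℕ) := Fin s ⊕ (Fin (p - s) ⊕ (Fin (p - s) ⊕ Fin s))

/-- Diagonal of the matrix of `K` on `P^α(s)`. -/
def PKdiag (p : ℕ) (α : ℂ) (s : ℕ) : PIdx p s → ℂ
  | .inl i => α * q p ^ ((s : ℤ) - 1 - 2 * (i : ℕ))
  | .inr (.inl j) => -α * q p ^ ((p : ℤ) - s - 1 - 2 * (j : ℕ))
  | .inr (.inr (.inl k)) => -α * q p ^ ((p : ℤ) - s - 1 - 2 * (k : ℕ))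
  | .inr (.inr (.inr l)) => α * q p ^ ((s : ℤ) - 1 - 2 * (l : ℕ))

/-- Matrix of `K` on `P^α(s)` in the standard basis. -/
def PK (p : ℕ) (α : ℂ) (s : ℕ) : Matrix (PIdx p s) (PIdx p s) ℂ :=
  Matrix.diagonal (PKdiag p α s)

/-- Matrix of `E` on `P^α(s)` in the standard basis. -/
def PE (p : ℕ) (α : ℂ) (s : ℕ) : Matrix (PIdx p s) (PIdx p s) ℂ :=
  Matrix.of fun i j =>
    match i, j with
    | .inl i, .inl j =>
        if (i : ℕ) + 1 = (j : ℕ) then α * qi p (j : ℕ) * qi p ((s : ℤ) - (j : ℕ)) else 0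
    | .inr (.inl jx), .inl j => if (j : ℕ) = 0 ∧ (jx : ℕ) + 1 = p - s then 1 else 0
    | .inr (.inr (.inr l)), .inl j => if (l : ℕ) + 1 = (j : ℕ) then 1 else 0
    | .inr (.inl i), .inr (.inl j) =>
        if (i : ℕ) + 1 = (j : ℕ) then -α * qi p (j : ℕ) * qi p ((p : ℤ) - s - (j : ℕ)) else 0
    | .inr (.inr (.inl i)), .inr (.inr (.inl k)) =>
        if (i : ℕ) + 1 = (k : ℕ) then -α * qi p (k : ℕ) * qi p ((p : ℤ) - s - (k : ℕ)) else 0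
    | .inr (.inr (.inr l)), .inr (.inr (.inl k)) =>
        if (k : ℕ) = 0 ∧ (l : ℕ) + 1 = s then 1 else 0
    | .inr (.inr (.inr i)), .inr (.inr (.inr l)) =>
        if (i : ℕ) + 1 = (l : ℕ) then α * qi p (l : ℕ) * qi p ((s : ℤ) - (l : ℕ)) else 0
    | _, _ => 0

/-- Matrix of `F` on `P^α(s)` in the standard basis. -/
def PF (p s : ℕ) : Matrix (PIdx p s) (PIdx p s) ℂ :=
  Matrix.of fun i j =>
    match i, j with
    | .inl i, .inl j => if (i : ℕ) = (j : ℕ) + 1 then (1 : ℂ) else 0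
    | .inr (.inr (.inl k)), .inl j => if (j : ℕ) + 1 = s ∧ (k : ℕ) = 0 then 1 else 0
    | .inr (.inl i), .inr (.inl j) => if (i : ℕ) = (j : ℕ) + 1 then 1 else 0
    | .inr (.inr (.inr l)), .inr (.inl j) => if (j : ℕ) + 1 = p - s ∧ (l : ℕ) = 0 then 1 else 0
    | .inr (.inr (.inl i)), .inr (.inr (.inl k)) => if (i : ℕ) = (k : ℕ) + 1 then 1 else 0
    | .inr (.inr (.inr i)), .inr (.inr (.inr l)) => if (i : ℕ) = (l : ℕ) + 1 then 1 else 0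
    | _, _ => 0

/-- The statement that `ρP α s` is the representation on `P^α(s)` for the relevant
values of `α` and `s`. -/
def IsPRep (p : ℕ)
    (ρP : (α : ℂ) → (s : ℕ) → (Uq p →ₐ[ℂ] Matrix (PIdx p s) (PIdx p s) ℂ)) : Prop :=
  ∀ α : ℂ, (α = 1 ∨ α = -1) → ∀ s : ℕ, 1 ≤ s → s ≤ p - 1 →
    ρP α s (KK p) = PK p α s ∧ ρP α s (EE p) = PE p α s ∧ ρP α s (FF p) = PF p s

/-! ### Symmetric linear forms, characters, and the forms `G_s` -/

/-- Symmetric linear forms. -/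
def IsSLF (p : ℕ) (φ : Uq p →ₗ[ℂ] ℂ) : Prop := ∀ x y : Uq p, φ (x * y) = φ (y * x)

/-- The character of a matrix representation. -/
def chiOf (p : ℕ) {n : Type} [Fintype n] [DecidableEq n]
    (ρ : Uq p →ₐ[ℂ] Matrix n n ℂ) : Uq p →ₗ[ℂ] ℂ :=
  (Matrix.traceLinearMap n ℂ ℂ).comp ρ.toLinearMap

/-- The matrix entry functional. -/
def entry {n : Type} (i j : n) : Matrix n n ℂ →ₗ[ℂ] ℂ where
  toFun M := M i j
  map_add' _ _ := rfl
  map_smul' _ _ := rfl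

/-- The symmetric linear form `G_s = tr H^+_s + tr H^-_{p-s}`. -/
def GOf (p : ℕ)
    (ρP : (α : ℂ) → (s : ℕ) → (Uq p →ₐ[ℂ] Matrix (PIdx p s) (PIdx p s) ℂ))
    (s : ℕ) : Uq p →ₗ[ℂ] ℂ :=
  (∑ i : Fin s,
    (entry (Sum.inr (Sum.inr (Sum.inr i))) (Sum.inl i)).comp (ρP 1 s).toLinearMap) +
  (∑ j : Fin (p - s),
    (entry (Sum.inr (Sum.inr (Sum.inr j))) (Sum.inl j)).comp (ρP (-1) (p - s)).toLinearMap)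

/-! ### Convolution product -/

/-- The convolution product of two linear forms, with respect to a comultiplication `Δ`. -/
def conv (p : ℕ) (Δ : Uq p →ₐ[ℂ] (Uq p ⊗[ℂ] Uq p)) (φ ψ : Uq p →ₗ[ℂ] ℂ) :
    Uq p →ₗ[ℂ] ℂ :=
  (LinearMap.mul' ℂ ℂ).comp ((TensorProduct.map φ ψ).comp Δ.toLinearMap)

/-- The statement that `Δ` is the comultiplication of `Ū_q(sl₂)`. -/
def IsCoprod (p : ℕ) (Δ : Uq p →ₐ[ℂ] (Uq p ⊗[ℂ] Uq p)) : Prop :=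
  Δ (EE p) = 1 ⊗ₜ[ℂ] EE p + EE p ⊗ₜ[ℂ] KK p ∧
  Δ (FF p) = FF p ⊗ₜ[ℂ] 1 + KKinv p ⊗ₜ[ℂ] FF p ∧
  Δ (KK p) = KK p ⊗ₜ[ℂ] KK p ∧
  Δ (KKinv p) = KKinv p ⊗ₜ[ℂ] KKinv p


/-- The space of symmetric linear forms, as a subspace of the dual. -/
def SLFsub (p : ℕ) : Submodule ℂ (Uq p →ₗ[ℂ] ℂ) where
  carrier := {φ | IsSLF p φ}
  add_mem' := by intro φ ψ hφ hψ x y; simp [hφ x y, hψ x y]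
  zero_mem' := by intro x y; rfl
  smul_mem' := by intro c φ hφ x y; simp [hφ x y]

/-- The index set of the GTA basis: `χ^±_s` for `1 ≤ s ≤ p` and `G_{s'}` for
`1 ≤ s' ≤ p-1`. -/
abbrev GTAidx (p : ℕ) := (Bool × Fin p) ⊕ Fin (p - 1)

/-- The GTA family `χ^+_1, …, χ^+_p, χ^-_1, …, χ^-_p, G_1, …, G_{p-1}`. -/
def GTA (p : ℕ) (ρX : (α : ℂ) → (s : ℕ) → (Uq p →ₐ[ℂ] Matrix (Fin s) (Fin s) ℂ))
    (ρP : (α : ℂ) → (s : ℕ) → (Uq p →ₐ[ℂ] Matrix (PIdx p s) (PIdx p s) ℂ)) :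
    GTAidx p → (Uq p →ₗ[ℂ] ℂ)
  | .inl (b, s) => chiOf p (ρX (if b then 1 else -1) ((s : ℕ) + 1))
  | .inr t => GOf p ρP ((t : ℕ) + 1)

/-!
The Casimir element `C` and the spectral idempotents `e_j` of `K` (weight `q^j`) generate the
weight-zero part of `Ū_q`, and `C` acts on `X^α(s)` by `α c_s` with `-c_{p-s} = c_s`. Since `F E`
and `E F` act on `e_{k-1}` and `e_{k+1}` as `C - c_k`, a `K`-invariant form `φ`, which is
determined by the numbers `φ (f(C) e_j)`, is symmetric exactly when `φ ((C - c_k) f(C) e_{k-1}) =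
φ ((C - c_k) f(C) e_{k+1})` for all `k` and `f`.

Upper bound: `φ (f(C) e_{k+1}) - φ (f(C) e_{k-1}) = f(c_k) jump_k` for every polynomial `f`, where
`jump_k` is the value at `f = 1`. Summing around the cycle of weights, with `f` a Lagrange
polynomial at `c_0, …, c_p`, the jumps with `-p < k < 0` determine all of them. As `F^p = 0` makes
a polynomial of degree `p` in `C` kill each `e_j`, the form is then determined by the `2p` values
on `C^i e_0` and `C^i e_1` for `i < p`; together these are `3p - 1` linear conditions.

Lower bound: `χ^α_s (f(C) e_j)` is `f(α c_s)` times a weight multiplicity, and `G_s (f(C) e_j)` is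
`f'(c_s)` times one, because `C` has a Jordan block from `b_i` to `a_i`. The weights in `G_s` form
a complete string of length `p`, so that `G_s` is symmetric, and evaluation at Lagrange and
Hermite interpolation polynomials shows that the family is triangular, hence independent.
-/

section LinearAlgebra

variable {𝕜 V A ι : Type*} [Field 𝕜]

theorem linearIndependent_of_triangular_eval [AddCommGroup V] [Module 𝕜 V] {α : Type*}
    [LinearOrder α] [WellFoundedLT α] {g : ι → Module.Dual 𝕜 V} (x : ι → V) (rank : ι → α)
    (hdiag : ∀ i, g i (x i) ≠ 0)
    (htri : ∀ i j, i ≠ j → rank i ≤ rank j → g j (x i) = 0) :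
    LinearIndependent 𝕜 g := by
  classical
  rw [linearIndependent_iff']
  intro s c hc
  have key : ∀ r, ∀ i ∈ s, rank i = r → c i = 0 := by
    intro r
    induction r using WellFoundedLT.induction with
    | ind r ih =>
      rintro i hi rfl
      have hsum : ∑ j ∈ s, c j * g j (x i) = 0 := by
        simpa using LinearMap.congr_fun hc (x i)
      rw [Finset.sum_eq_single_of_mem i hi] at hsum
      · exact (mul_eq_zero.mp hsum).resolve_right (hdiag i)
      · intro j hj hji
        rcases lt_or_ge (rank j) (rank i) with hlt | hge
        · rw [ih _ hlt j hj rfl, zero_mul]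
        · rw [htri i j hji.symm hge, mul_zero]
  exact fun i hi => key _ i hi rfl

theorem span_range_eq_and_finrank_eq_card [AddCommGroup V] [Module 𝕜 V] [Fintype ι]
    {S : Submodule 𝕜 (Module.Dual 𝕜 V)} {g : ι → Module.Dual 𝕜 V} (hgS : ∀ i, g i ∈ S)
    (hg : LinearIndependent 𝕜 g) (x : ι → V)
    (hx : ∀ φ ∈ S, (∀ i, φ (x i) = 0) → φ = 0) :
    Submodule.span 𝕜 (Set.range g) = S ∧ Module.finrank 𝕜 S = Fintype.card ι := by
  let evalAt : S →ₗ[𝕜] (ι → 𝕜) :=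
    LinearMap.pi fun i => (Module.Dual.eval 𝕜 V (x i)).comp S.subtype
  have hinj : Function.Injective evalAt :=
    (injective_iff_map_eq_zero _).mpr fun φ hφ =>
      Subtype.ext (hx φ φ.2 fun i => congrFun hφ i)
  have : FiniteDimensional 𝕜 S := Module.Finite.of_injective evalAt hinj
  have hle : Module.finrank 𝕜 S ≤ Fintype.card ι := by
    simpa using LinearMap.finrank_le_finrank_of_injective hinj
  have hspan : Submodule.span 𝕜 (Set.range g) = S :=
    Submodule.eq_of_le_of_finrank_le (Submodule.span_le.mpr (Set.range_subset_iff.mpr hgS))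
      (hle.trans_eq (finrank_span_eq_card hg).symm)
  exact ⟨hspan, hspan ▸ finrank_span_eq_card hg⟩

theorem submodule_eq_top_of_adjoin_eq_top [Ring A] [Algebra 𝕜 A] {s : Set A}
    (hs : Algebra.adjoin 𝕜 s = ⊤) {S : Submodule 𝕜 A} (hone : 1 ∈ S)
    (hmul : ∀ y ∈ s, ∀ x ∈ S, y * x ∈ S) : S = ⊤ := by
  have key : ∀ y ∈ Algebra.adjoin 𝕜 s, ∀ x ∈ S, y * x ∈ S := by
    intro y hy
    induction hy using Algebra.adjoin_induction with
    | mem y hy => exact hmul y hy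
    | algebraMap c => intro x hx; rw [← Algebra.smul_def]; exact S.smul_mem c hx
    | add y z _ _ hy hz => intro x hx; rw [add_mul]; exact S.add_mem (hy x hx) (hz x hx)
    | mul y z _ _ hy hz => intro x hx; rw [mul_assoc]; exact hy _ (hz x hx)
  refine eq_top_iff.mpr fun y _ => ?_
  simpa using key y (hs ▸ Algebra.mem_top) 1 hone

theorem map_mul_comm_of_adjoin [Ring A] [Algebra 𝕜 A] [AddCommGroup V] [Module 𝕜 V] {s : Set A}
    (hs : Algebra.adjoin 𝕜 s = ⊤) {φ : A →ₗ[𝕜] V}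
    (hφ : ∀ y ∈ s, ∀ x, φ (y * x) = φ (x * y)) (y x : A) : φ (y * x) = φ (x * y) := by
  have key : ∀ y ∈ Algebra.adjoin 𝕜 s, ∀ x, φ (y * x) = φ (x * y) := by
    intro y hy
    induction hy using Algebra.adjoin_induction with
    | mem y hy => exact hφ y hy
    | algebraMap c => intro x; rw [Algebra.commutes]
    | add y z _ _ hy hz => intro x; rw [add_mul, mul_add, map_add, map_add, hy, hz]
    | mul y z _ _ hy hz => intro x; rw [mul_assoc, hy, mul_assoc, hz, mul_assoc]
  exact key y (hs ▸ Algebra.mem_top) x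

end LinearAlgebra

section Polynomial

open Polynomial

theorem aeval_apply_of_apply_eq_smul_add {R M : Type*} [CommRing R] [AddCommGroup M] [Module R M]
    {T : Module.End R M} {a b : M} {c : R} (hb : T b = c • b + a) (ha : T a = c • a) (f : R[X]) :
    aeval T f b = f.eval c • b + f.derivative.eval c • a := by
  have hpow : ∀ n : ℕ, (T ^ n) a = c ^ n • a := fun n => by
    induction n with
    | zero => simp
    | succ n ih => rw [pow_succ, Module.End.mul_apply, ha, map_smul, ih, smul_smul, pow_succ']
  induction f using Polynomial.induction_on' with
  | add f g hf hg =>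
    simp only [map_add, LinearMap.add_apply, hf, hg, eval_add, add_smul]
    abel
  | monomial n r =>
    suffices h : (T ^ n) b = c ^ n • b + (n * c ^ (n - 1)) • a by
      simp [aeval_monomial, h, smul_smul, derivative_monomial, mul_assoc]
    induction n with
    | zero => simp
    | succ n ih =>
      rw [pow_succ, Module.End.mul_apply, hb, map_add, map_smul, ih, hpow]
      rcases n with _ | n
      · simp
      · simp only [smul_add, smul_smul, Nat.add_sub_cancel, add_assoc, ← add_smul]
        push_cast
        ring_nf

theorem eq_zero_of_map_X_pow_eq_zero {R M : Type*} [CommRing R] [AddCommGroup M] [Module R M]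
    {Ψ : R[X]} (hΨ : Ψ.Monic) {L : R[X] →ₗ[R] M} (hmul : ∀ f, L (Ψ * f) = 0)
    (hpow : ∀ i < Ψ.natDegree, L (X ^ i) = 0) : L = 0 := by
  nontriviality R
  have hlow : degreeLT R Ψ.natDegree ≤ LinearMap.ker L := by
    classical
    rw [degreeLT_eq_span_X_pow, Submodule.span_le]
    intro g hg
    obtain ⟨i, hi, rfl⟩ := Finset.mem_image.mp (Finset.mem_coe.mp hg)
    exact hpow i (Finset.mem_range.mp hi)
  refine LinearMap.ext fun f => ?_
  have hrem : L (f %ₘ Ψ) = 0 := hlow <| mem_degreeLT.mpr <|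
    (degree_modByMonic_lt f hΨ).trans_eq (degree_eq_natDegree hΨ.ne_zero)
  rw [← modByMonic_add_div f Ψ, map_add, hrem, hmul, add_zero, LinearMap.zero_apply]

end Polynomial

section SpectralIdempotents

variable {𝕜 V A : Type*} [Field 𝕜]

theorem geom_sum_of_pow_eq_one {n : ℕ} {x : 𝕜} (hx : x ^ n = 1) [Decidable (x = 1)] :
    ∑ m ∈ Finset.range n, x ^ m = if x = 1 then (n : 𝕜) else 0 := by
  split_ifs with h
  · simp [h]
  · have := mul_geom_sum x n
    rw [hx, sub_self, mul_eq_zero] at this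
    exact this.resolve_left (sub_ne_zero.mpr h)

/-- The projection onto the `μ`-eigenspace of an element `k` of order dividing `n`, where `μ` is
an `n`-th root of unity, written as a polynomial in `k`. -/
def spectralIdem [Ring A] [Algebra 𝕜 A] (n : ℕ) (k : A) (μ : 𝕜) : A :=
  (n : 𝕜)⁻¹ • ∑ m ∈ Finset.range n, (μ⁻¹ • k) ^ m

variable [Ring A] [Algebra 𝕜 A] {n : ℕ} {k : A} {μ ν : 𝕜}

theorem mul_spectralIdem (hk : k ^ n = 1) (hμ : μ ^ n = 1) :
    k * spectralIdem n k μ = μ • spectralIdem n k μ := by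
  rcases eq_or_ne n 0 with rfl | hn
  · simp [spectralIdem]
  have hμ0 : μ ≠ 0 := by rintro rfl; simp [hn] at hμ
  have hfix : (μ⁻¹ • k) * ∑ m ∈ Finset.range n, (μ⁻¹ • k) ^ m
      = ∑ m ∈ Finset.range n, (μ⁻¹ • k) ^ m := by
    rw [← sub_eq_zero, ← sub_one_mul, mul_geom_sum, smul_pow, hk, inv_pow, hμ, inv_one, one_smul,
      sub_self]
  rw [spectralIdem, mul_smul_comm, smul_comm]
  congr 1
  conv_rhs => rw [← hfix, smul_mul_assoc, smul_inv_smul₀ hμ0]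

theorem mul_spectralIdem_of_mul_eq_smul {x : A} {c : 𝕜} (hc : c ≠ 0) (hx : k * x = c • (x * k)) :
    x * spectralIdem n k μ = spectralIdem n k (c * μ) * x := by
  have hsemi : SemiconjBy x (μ⁻¹ • k) ((c * μ)⁻¹ • k) := by
    rw [SemiconjBy, mul_smul_comm, smul_mul_assoc, hx, smul_smul]
    congr 1
    field_simp
  simp only [spectralIdem, mul_smul_comm, smul_mul_assoc, Finset.mul_sum, Finset.sum_mul,
    (hsemi.pow_right _).eq]

theorem sum_spectralIdem_eq_one {ζ : 𝕜} [NeZero n] (hζ : IsPrimitiveRoot ζ n) (k : A) :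
    ∑ j ∈ Finset.range n, spectralIdem n k (ζ ^ j) = 1 := by
  classical
  have hn : (n : 𝕜) ≠ 0 := (hζ.neZero').out
  have hinner : ∀ m ∈ Finset.range n, ∑ j ∈ Finset.range n, ((ζ ^ j)⁻¹ • k) ^ m
      = if m = 0 then (n : 𝕜) • 1 else 0 := by
    intro m hm
    have hroot : (ζ⁻¹ ^ m) ^ n = 1 := by rw [pow_right_comm, inv_pow, hζ.pow_eq_one]; simp
    have hone : ζ⁻¹ ^ m = 1 ↔ m = 0 :=
      ⟨fun h => Nat.eq_zero_of_dvd_of_lt ((hζ.inv.pow_eq_one_iff_dvd m).mp h)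
        (Finset.mem_range.mp hm), fun h => by simp [h]⟩
    calc ∑ j ∈ Finset.range n, ((ζ ^ j)⁻¹ • k) ^ m
        = (∑ j ∈ Finset.range n, (ζ⁻¹ ^ m) ^ j) • k ^ m := by
          simp_rw [Finset.sum_smul, smul_pow, ← inv_pow, pow_right_comm ζ⁻¹ m]
      _ = _ := by
          rw [geom_sum_of_pow_eq_one hroot]
          split_ifs <;> simp_all
  simp_rw [spectralIdem, ← Finset.smul_sum]
  rw [Finset.sum_comm, Finset.sum_congr rfl hinner,
    Finset.sum_ite_eq' _ _ fun _ => (n : 𝕜) • (1 : A),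
    if_pos (Finset.mem_range.mpr (NeZero.pos n)), inv_smul_smul₀ hn]

theorem map_spectralIdem {B : Type*} [Ring B] [Algebra 𝕜 B] (ρ : A →ₐ[𝕜] B) :
    ρ (spectralIdem n k μ) = spectralIdem n (ρ k) μ := by
  simp [spectralIdem]

theorem spectralIdem_apply_of_apply_eq_smul [DecidableEq 𝕜] [AddCommGroup V] [Module 𝕜 V]
    (hn : (n : 𝕜) ≠ 0) {T : Module.End 𝕜 V} {v : V} (hv : T v = ν • v) (hμ : μ ^ n = 1)
    (hν : ν ^ n = 1) : spectralIdem n T μ v = if ν = μ then v else 0 := by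
  have hn0 : n ≠ 0 := by rintro rfl; simp at hn
  have hμ0 : μ ≠ 0 := by rintro rfl; simp [hn0] at hμ
  have hpow : ∀ m : ℕ, ((μ⁻¹ • T) ^ m) v = (μ⁻¹ * ν) ^ m • v := fun m => by
    induction m with
    | zero => simp
    | succ m ih =>
      rw [pow_succ, Module.End.mul_apply, LinearMap.smul_apply, hv, smul_smul, map_smul, ih,
        smul_smul, pow_succ']
  have hroot : (μ⁻¹ * ν) ^ n = 1 := by rw [mul_pow, inv_pow, hμ, hν, inv_one, one_mul]
  have hone : μ⁻¹ * ν = 1 ↔ ν = μ := by rw [inv_mul_eq_one₀ hμ0, eq_comm]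
  rw [spectralIdem, LinearMap.smul_apply, LinearMap.sum_apply,
    Finset.sum_congr rfl fun m _ => hpow m, ← Finset.sum_smul, geom_sum_of_pow_eq_one hroot]
  simp only [hone]
  split_ifs <;> simp [smul_smul, hn]

end SpectralIdempotents

section RootOfUnity

variable {p : ℕ}

theorem isPrimitiveRoot_q (hp : 2 ≤ p) : IsPrimitiveRoot (q p) (2 * p) := by
  have : (p : ℂ) ≠ 0 := Nat.cast_ne_zero.mpr (by lia)
  have hq : q p = Complex.exp (2 * Real.pi * Complex.I / ((2 * p : ℕ) : ℂ)) := by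
    rw [q]
    push_cast
    field_simp
  exact hq ▸ Complex.isPrimitiveRoot_exp (2 * p) (by lia)

theorem q_ne_zero (p : ℕ) : q p ≠ 0 := Complex.exp_ne_zero _

theorem q_zpow_eq_one_iff (hp : 2 ≤ p) (k : ℤ) : q p ^ k = 1 ↔ 2 * (p : ℤ) ∣ k := by
  exact_mod_cast (isPrimitiveRoot_q hp).zpow_eq_one_iff_dvd k

theorem q_zpow_eq_zpow_iff (hp : 2 ≤ p) (a b : ℤ) :
    q p ^ a = q p ^ b ↔ 2 * (p : ℤ) ∣ a - b := by
  rw [← q_zpow_eq_one_iff hp, zpow_sub₀ (q_ne_zero p),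
    div_eq_one_iff_eq (zpow_ne_zero _ (q_ne_zero p))]

theorem q_zpow_add_two_mul (hp : 2 ≤ p) (k : ℤ) : q p ^ (k + 2 * p) = q p ^ k :=
  (q_zpow_eq_zpow_iff hp _ _).mpr ⟨1, by ring⟩

theorem q_zpow_pow_two_mul (hp : 2 ≤ p) (k : ℤ) : (q p ^ k) ^ (2 * p) = 1 := by
  rw [← zpow_natCast, zpow_comm, zpow_natCast, (isPrimitiveRoot_q hp).pow_eq_one, one_zpow]

theorem q_zpow_self (hp : 2 ≤ p) : q p ^ (p : ℤ) = -1 := by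
  have hroot : IsPrimitiveRoot (q p ^ p) 2 := (isPrimitiveRoot_q hp).pow (by lia) (mul_comm 2 p)
  rw [zpow_natCast, hroot.eq_neg_one_of_two_right]

theorem q_sub_inv_ne_zero (hp : 2 ≤ p) : q p - (q p)⁻¹ ≠ 0 := by
  intro h
  have h11 : q p ^ (1 : ℤ) = q p ^ (-1 : ℤ) := by simpa using sub_eq_zero.mp h
  have := Int.le_of_dvd (by lia) ((q_zpow_eq_zpow_iff hp _ _).mp h11)
  lia

/-- The number `(q^k + q^{-k}) / (q - q⁻¹)²`; up to sign these are the eigenvalues of the Casimir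
element. -/
def casimirValue (p : ℕ) (k : ℤ) : ℂ := (q p ^ k + q p ^ (-k)) / (q p - (q p)⁻¹) ^ 2

theorem neg_casimirValue_sub (hp : 2 ≤ p) (k : ℤ) :
    -casimirValue p (p - k) = casimirValue p k := by
  simp only [casimirValue, neg_sub, zpow_sub₀ (q_ne_zero p), q_zpow_self hp, zpow_neg]
  field_simp
  ring

theorem casimirValue_injOn (hp : 2 ≤ p) :
    Set.InjOn (fun k : ℕ => casimirValue p k) (Finset.range (p + 1)) := by
  intro a ha b hb hab
  rw [Finset.coe_range, Set.mem_Iio] at ha hb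
  have hprod : (q p ^ (a : ℤ) - q p ^ (b : ℤ)) * (q p ^ (a + b : ℤ) - 1) = 0 := by
    have ha0 := zpow_ne_zero (a : ℤ) (q_ne_zero p)
    have hb0 := zpow_ne_zero (b : ℤ) (q_ne_zero p)
    have hdq := pow_ne_zero 2 (q_sub_inv_ne_zero hp)
    simp only [casimirValue, div_left_inj' hdq, zpow_neg] at hab
    rw [zpow_add₀ (q_ne_zero p)]
    field_simp at hab
    linear_combination hab
  rcases mul_eq_zero.mp hprod with h | h
  · obtain ⟨k, hk⟩ := (q_zpow_eq_zpow_iff hp a b).mp (sub_eq_zero.mp h)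
    have hk0 : k = 0 := by nlinarith
    lia
  · obtain ⟨k, hk⟩ := (q_zpow_eq_one_iff hp _).mp (sub_eq_zero.mp h)
    have hk0 : k = 0 ∨ k = 1 := by
      have : -1 < k := by nlinarith
      have : k < 2 := by nlinarith
      lia
    rcases hk0 with rfl | rfl <;> lia

theorem qi_mul_qi_sub_add_casimirValue (hp : 2 ≤ p) (i s : ℤ) :
    qi p i * qi p (s - i) + casimirValue p (s - 2 * i) = casimirValue p s := by
  have hq := q_ne_zero p
  have hdq := q_sub_inv_ne_zero hp
  have hs := zpow_ne_zero s hq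
  have hi := zpow_ne_zero i hq
  simp only [qi, casimirValue, neg_sub, zpow_sub₀ hq, zpow_neg, two_mul, zpow_add₀ hq]
  generalize q p - (q p)⁻¹ = d at *
  field_simp
  ring

end RootOfUnity

section Relations

variable {p : ℕ}

theorem KK_mul_KKinv (p : ℕ) : KK p * KKinv p = 1 := by
  simpa [KK, KKinv] using RingQuot.mkAlgHom_rel ℂ (rel.KKinv (p := p))

theorem KKinv_mul_KK (p : ℕ) : KKinv p * KK p = 1 := by
  simpa [KK, KKinv] using RingQuot.mkAlgHom_rel ℂ (rel.KinvK (p := p))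

theorem EE_pow_self (p : ℕ) : EE p ^ p = 0 := by
  simpa [EE] using RingQuot.mkAlgHom_rel ℂ (rel.Ep (p := p))

theorem FF_pow_self (p : ℕ) : FF p ^ p = 0 := by
  simpa [FF] using RingQuot.mkAlgHom_rel ℂ (rel.Fp (p := p))

theorem KK_pow_two_mul (p : ℕ) : KK p ^ (2 * p) = 1 := by
  simpa [KK] using RingQuot.mkAlgHom_rel ℂ (rel.K2p (p := p))

theorem EE_mul_FF_sub_FF_mul_EE (p : ℕ) :
    EE p * FF p - FF p * EE p = (q p - (q p)⁻¹)⁻¹ • (KK p - KKinv p) := by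
  simpa [KK, KKinv, EE, FF] using RingQuot.mkAlgHom_rel ℂ (rel.EF (p := p))

theorem KKinv_eq_KK_pow (hp : 2 ≤ p) : KKinv p = KK p ^ (2 * p - 1) := by
  have hpow : KK p ^ (2 * p - 1) * KK p = 1 := by
    rw [← pow_succ, Nat.sub_add_cancel (by lia), KK_pow_two_mul]
  exact (left_inv_eq_right_inv hpow (KK_mul_KKinv p)).symm

theorem adjoin_EE_FF_KK (hp : 2 ≤ p) : Algebra.adjoin ℂ {EE p, FF p, KK p} = ⊤ := by
  refine eq_top_iff.mpr fun x _ => ?_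
  obtain ⟨y, rfl⟩ := RingQuot.mkAlgHom_surjective ℂ (rel p) x
  have hE : EE p ∈ Algebra.adjoin ℂ {EE p, FF p, KK p} := Algebra.subset_adjoin (by simp)
  have hF : FF p ∈ Algebra.adjoin ℂ {EE p, FF p, KK p} := Algebra.subset_adjoin (by simp)
  have hK : KK p ∈ Algebra.adjoin ℂ {EE p, FF p, KK p} := Algebra.subset_adjoin (by simp)
  have hKinv : KKinv p ∈ Algebra.adjoin ℂ {EE p, FF p, KK p} :=
    KKinv_eq_KK_pow hp ▸ pow_mem hK _
  induction y using FreeAlgebra.induction with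
  | grade0 r => simp only [AlgHom.commutes, Subalgebra.algebraMap_mem]
  | grade1 g =>
    cases g with
    | E => exact hE
    | F => exact hF
    | K => exact hK
    | Kinv => exact hKinv
  | mul a b ha hb => rw [map_mul]; exact mul_mem (ha trivial) (hb trivial)
  | add a b ha hb => rw [map_add]; exact add_mem (ha trivial) (hb trivial)

/-- `x` has weight `n` for the adjoint action of `K`, that is `K x K⁻¹ = qⁿ x`. -/
def HasWeight (n : ℤ) (x : Uq p) : Prop := KK p * x = q p ^ n • (x * KK p)

theorem hasWeight_EE (p : ℕ) : HasWeight 2 (EE p) := by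
  rw [HasWeight, zpow_ofNat]
  simpa [KK, EE] using RingQuot.mkAlgHom_rel ℂ (rel.KE (p := p))

theorem hasWeight_FF (p : ℕ) : HasWeight (-2) (FF p) := by
  rw [HasWeight, zpow_neg, zpow_ofNat]
  simpa [KK, FF] using RingQuot.mkAlgHom_rel ℂ (rel.KF (p := p))

namespace HasWeight

variable {m n : ℤ} {x y : Uq p}

theorem mul (hx : HasWeight m x) (hy : HasWeight n y) : HasWeight (m + n) (x * y) := by
  rw [HasWeight, ← mul_assoc, hx, smul_mul_assoc, mul_assoc x, hy, mul_smul_comm, smul_smul,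
    zpow_add₀ (q_ne_zero p), mul_assoc]

theorem pow (hx : HasWeight n x) (a : ℕ) : HasWeight (n * a) (x ^ a) := by
  induction a with
  | zero => simp [HasWeight]
  | succ a ih => simpa [pow_succ, mul_add] using ih.mul hx

theorem KKinv_mul (hx : HasWeight n x) : KKinv p * x = q p ^ (-n) • (x * KKinv p) := by
  have hxK : x * KK p = q p ^ (-n) • (KK p * x) := by
    rw [hx, smul_smul, zpow_neg, inv_mul_cancel₀ (zpow_ne_zero n (q_ne_zero p)), one_smul]
  calc KKinv p * x = KKinv p * (x * KK p) * KKinv p := by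
        rw [mul_assoc, mul_assoc, KK_mul_KKinv, mul_one]
    _ = q p ^ (-n) • (x * KKinv p) := by
        rw [hxK, mul_smul_comm, smul_mul_assoc, ← mul_assoc, KKinv_mul_KK, one_mul]

end HasWeight

end Relations

section Casimir

open Polynomial

variable {p : ℕ}

/-- The Casimir element `FE + (q K + q⁻¹ K⁻¹) / (q - q⁻¹)²`, which is central. -/
def casimir (p : ℕ) : Uq p :=
  FF p * EE p + ((q p - (q p)⁻¹) ^ 2)⁻¹ • (q p • KK p + (q p)⁻¹ • KKinv p)

theorem casimir_eq_EE_mul_FF_add (hp : 2 ≤ p) : casimir p =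
    EE p * FF p + ((q p - (q p)⁻¹) ^ 2)⁻¹ • ((q p)⁻¹ • KK p + q p • KKinv p) := by
  have hdq : (q p - (q p)⁻¹)⁻¹ = ((q p - (q p)⁻¹) ^ 2)⁻¹ * (q p - (q p)⁻¹) := by
    have := q_sub_inv_ne_zero hp
    field_simp
  have hFE : FF p * EE p = EE p * FF p - (((q p - (q p)⁻¹) ^ 2)⁻¹ * (q p - (q p)⁻¹)) •
      (KK p - KKinv p) := by
    rw [← hdq, ← EE_mul_FF_sub_FF_mul_EE, sub_sub_cancel]
  rw [casimir, hFE]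
  module

theorem commute_casimir_EE (hp : 2 ≤ p) : Commute (casimir p) (EE p) := by
  have hq := q_ne_zero p
  have hKE : KK p * EE p = (q p ^ 2) • (EE p * KK p) := mod_cast hasWeight_EE p
  have hKinvE : KKinv p * EE p = (q p ^ 2)⁻¹ • (EE p * KKinv p) := by
    simpa [zpow_neg, zpow_ofNat] using (hasWeight_EE p).KKinv_mul
  rw [Commute, SemiconjBy, casimir_eq_EE_mul_FF_add hp, add_mul, ← casimir_eq_EE_mul_FF_add hp,
    casimir, mul_add, mul_assoc]
  simp only [smul_mul_assoc, add_mul, mul_smul_comm, mul_add, hKE, hKinvE, smul_smul]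
  congr 3 <;> congr 1 <;> field_simp

theorem commute_casimir_FF (hp : 2 ≤ p) : Commute (casimir p) (FF p) := by
  have hq := q_ne_zero p
  have hKF : KK p * FF p = (q p ^ 2)⁻¹ • (FF p * KK p) := by
    simpa [HasWeight, zpow_neg, zpow_ofNat] using hasWeight_FF p
  have hKinvF : KKinv p * FF p = (q p ^ 2) • (FF p * KKinv p) := by
    simpa [zpow_ofNat] using (hasWeight_FF p).KKinv_mul
  rw [Commute, SemiconjBy]
  conv_rhs => rw [casimir_eq_EE_mul_FF_add hp]
  rw [casimir, add_mul, mul_add, mul_assoc]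
  simp only [smul_mul_assoc, add_mul, mul_smul_comm, mul_add, hKF, hKinvF, smul_smul]
  congr 3 <;> congr 1 <;> field_simp

theorem commute_casimir_KK (p : ℕ) : Commute (casimir p) (KK p) := by
  have hFE : Commute (FF p * EE p) (KK p) := by
    simpa [HasWeight, Commute, SemiconjBy, eq_comm] using (hasWeight_FF p).mul (hasWeight_EE p)
  have hKinv : Commute (KKinv p) (KK p) := (KKinv_mul_KK p).trans (KK_mul_KKinv p).symm
  exact hFE.add_left <| Commute.smul_left
    ((Commute.refl (KK p)).smul_left _ |>.add_left (hKinv.smul_left _)) _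

theorem casimir_mem_center (hp : 2 ≤ p) : casimir p ∈ Subalgebra.center ℂ (Uq p) := by
  have hle : Algebra.adjoin ℂ {EE p, FF p, KK p} ≤ Subalgebra.centralizer ℂ {casimir p} := by
    refine Algebra.adjoin_le fun y hy => Subalgebra.mem_centralizer_iff ℂ |>.mpr ?_
    rintro _ rfl
    rcases hy with rfl | rfl | rfl
    · exact commute_casimir_EE hp
    · exact commute_casimir_FF hp
    · exact commute_casimir_KK p
  refine Subalgebra.mem_center_iff.mpr fun x => ?_
  have hx : x ∈ Subalgebra.centralizer ℂ {casimir p} :=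
    hle (adjoin_EE_FF_KK hp ▸ Algebra.mem_top)
  exact (Subalgebra.mem_centralizer_iff ℂ |>.mp hx _ rfl).symm

theorem commute_aeval_casimir (hp : 2 ≤ p) (f : ℂ[X]) (x : Uq p) :
    Commute x (aeval (casimir p) f) := by
  have hle : Algebra.adjoin ℂ {casimir p} ≤ Subalgebra.center ℂ (Uq p) :=
    Algebra.adjoin_le (Set.singleton_subset_iff.mpr (casimir_mem_center hp))
  exact Subalgebra.mem_center_iff.mp (hle (aeval_mem_adjoin_singleton ℂ _)) x

section WeightVectors

variable {M : Type*} [AddCommGroup M] [Module ℂ M] {ρ : Uq p →ₐ[ℂ] Module.End ℂ M} {v : M}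
  {α : ℂ} {w : ℤ}

theorem KKinv_apply_of_weight (hα : α * α = 1) (hv : ρ (KK p) v = (α * q p ^ w) • v) :
    ρ (KKinv p) v = (α * q p ^ (-w)) • v := by
  have hcancel : α * q p ^ (-w) * (α * q p ^ w) = 1 := by
    rw [mul_mul_mul_comm, hα, one_mul, ← zpow_add₀ (q_ne_zero p), neg_add_cancel, zpow_zero]
  have hKinvK : ρ (KKinv p) (ρ (KK p) v) = v := by
    rw [← Module.End.mul_apply, ← map_mul, KKinv_mul_KK, map_one, Module.End.one_apply]
  rw [hv, map_smul] at hKinvK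
  rw [← one_smul ℂ (ρ (KKinv p) v), ← hcancel, mul_smul, hKinvK]

theorem casimir_apply_eq_FF_EE_add (hα : α * α = 1) (hv : ρ (KK p) v = (α * q p ^ w) • v) :
    ρ (casimir p) v = ρ (FF p) (ρ (EE p) v) + (α * casimirValue p (w + 1)) • v := by
  simp only [casimir, map_add, map_mul, map_smul, LinearMap.add_apply, LinearMap.smul_apply,
    Module.End.mul_apply, hv, KKinv_apply_of_weight hα hv, casimirValue, neg_add,
    zpow_add₀ (q_ne_zero p), zpow_one, zpow_neg_one]
  module

theorem casimir_apply_eq_EE_FF_add (hp : 2 ≤ p) (hα : α * α = 1)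
    (hv : ρ (KK p) v = (α * q p ^ w) • v) :
    ρ (casimir p) v = ρ (EE p) (ρ (FF p) v) + (α * casimirValue p (w - 1)) • v := by
  simp only [casimir_eq_EE_mul_FF_add hp, map_add, map_mul, map_smul, LinearMap.add_apply,
    LinearMap.smul_apply, Module.End.mul_apply, hv, KKinv_apply_of_weight hα hv, casimirValue,
    sub_eq_add_neg, neg_add, neg_neg, zpow_add₀ (q_ne_zero p), zpow_one, zpow_neg_one]
  module

end WeightVectors

theorem FF_mul_EE_mul {v : Uq p} {w : ℤ} (hv : KK p * v = q p ^ w • v) :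
    FF p * (EE p * v) = (casimir p - algebraMap ℂ _ (casimirValue p (w + 1))) * v := by
  have h := casimir_apply_eq_FF_EE_add (ρ := Algebra.lmul ℂ (Uq p)) (v := v) (w := w) (one_mul 1)
    (by simpa using hv)
  simp only [Algebra.coe_lmul_eq_mul, LinearMap.mul_apply', one_mul] at h
  rw [sub_mul, h, Algebra.algebraMap_eq_smul_one, smul_one_mul, add_sub_cancel_right]

theorem EE_mul_FF_mul (hp : 2 ≤ p) {v : Uq p} {w : ℤ} (hv : KK p * v = q p ^ w • v) :
    EE p * (FF p * v) = (casimir p - algebraMap ℂ _ (casimirValue p (w - 1))) * v := by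
  have h := casimir_apply_eq_EE_FF_add (ρ := Algebra.lmul ℂ (Uq p)) (v := v) (w := w) hp (one_mul 1)
    (by simpa using hv)
  simp only [Algebra.coe_lmul_eq_mul, LinearMap.mul_apply', one_mul] at h
  rw [sub_mul, h, Algebra.algebraMap_eq_smul_one, smul_one_mul, add_sub_cancel_right]

end Casimir

section WeightIdempotents

open Polynomial

variable {p : ℕ}

/-- The idempotent of `Ū_q` projecting onto the vectors of `K`-weight `q^j`. -/
def weightIdem (p : ℕ) (j : ℤ) : Uq p := spectralIdem (2 * p) (KK p) (q p ^ j)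

theorem KK_mul_weightIdem (hp : 2 ≤ p) (j : ℤ) :
    KK p * weightIdem p j = q p ^ j • weightIdem p j :=
  mul_spectralIdem (KK_pow_two_mul p) (q_zpow_pow_two_mul hp j)

theorem HasWeight.mul_weightIdem {n : ℤ} {x : Uq p} (hx : HasWeight n x) (j : ℤ) :
    x * weightIdem p j = weightIdem p (j + n) * x := by
  rw [weightIdem, weightIdem, add_comm, zpow_add₀ (q_ne_zero p)]
  exact mul_spectralIdem_of_mul_eq_smul (zpow_ne_zero n (q_ne_zero p)) hx

theorem weightIdem_periodic (hp : 2 ≤ p) : Function.Periodic (weightIdem p) (2 * p) := fun j => by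
  rw [weightIdem, q_zpow_add_two_mul hp, weightIdem]

theorem sum_weightIdem (hp : 2 ≤ p) : ∑ j ∈ Finset.range (2 * p), weightIdem p j = 1 := by
  have : NeZero (2 * p) := ⟨by lia⟩
  simpa [weightIdem] using sum_spectralIdem_eq_one (isPrimitiveRoot_q hp) (KK p)

/-- `casimirIdem p j f` is `f(C) e_j`, where `C` is the Casimir element and `e_j` the idempotent
of weight `q^j`. These elements span the weight-zero part of `Ū_q`. -/
def casimirIdem (p : ℕ) (j : ℤ) : ℂ[X] →ₗ[ℂ] Uq p :=
  (LinearMap.mulRight ℂ (weightIdem p j)).comp (aeval (casimir p)).toLinearMap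

theorem casimirIdem_apply (j : ℤ) (f : ℂ[X]) :
    casimirIdem p j f = aeval (casimir p) f * weightIdem p j := rfl

theorem casimirIdem_one (j : ℤ) : casimirIdem p j 1 = weightIdem p j := by
  rw [casimirIdem_apply, map_one, one_mul]

theorem casimirIdem_periodic (hp : 2 ≤ p) : Function.Periodic (casimirIdem p) (2 * p) := fun j => by
  rw [casimirIdem, weightIdem_periodic hp, casimirIdem]

theorem aeval_casimir_mul_casimirIdem (j : ℤ) (f g : ℂ[X]) :
    aeval (casimir p) g * casimirIdem p j f = casimirIdem p j (g * f) := by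
  rw [casimirIdem_apply, casimirIdem_apply, map_mul, mul_assoc]

theorem HasWeight.mul_casimirIdem (hp : 2 ≤ p) {n : ℤ} {x : Uq p} (hx : HasWeight n x) (j : ℤ)
    (f : ℂ[X]) : x * casimirIdem p j f = casimirIdem p (j + n) f * x := by
  rw [casimirIdem_apply, ← mul_assoc, (commute_aeval_casimir hp f x).eq, mul_assoc,
    hx.mul_weightIdem, ← mul_assoc, casimirIdem_apply]

theorem casimirIdem_mul_EE (hp : 2 ≤ p) (j : ℤ) (f : ℂ[X]) :
    casimirIdem p j f * EE p = EE p * casimirIdem p (j - 2) f := by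
  rw [(hasWeight_EE p).mul_casimirIdem hp, sub_add_cancel]

theorem casimirIdem_mul_FF (hp : 2 ≤ p) (j : ℤ) (f : ℂ[X]) :
    casimirIdem p j f * FF p = FF p * casimirIdem p (j + 2) f := by
  rw [(hasWeight_FF p).mul_casimirIdem hp, add_neg_cancel_right]

theorem KK_mul_casimirIdem (hp : 2 ≤ p) (j : ℤ) (f : ℂ[X]) :
    KK p * casimirIdem p j f = q p ^ j • casimirIdem p j f := by
  rw [casimirIdem_apply, ← mul_assoc, (commute_aeval_casimir hp f _).eq, mul_assoc,
    KK_mul_weightIdem hp, mul_smul_comm]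

theorem casimirIdem_mul_KK (hp : 2 ≤ p) (j : ℤ) (f : ℂ[X]) :
    casimirIdem p j f * KK p = q p ^ j • casimirIdem p j f := by
  have hK : HasWeight 0 (KK p) := by rw [HasWeight, zpow_zero, one_smul]
  rw [← KK_mul_casimirIdem hp, hK.mul_casimirIdem hp, add_zero]

theorem HasWeight.KK_mul_mul_casimirIdem (hp : 2 ≤ p) {n : ℤ} {x : Uq p} (hx : HasWeight n x)
    (j : ℤ) (f : ℂ[X]) :
    KK p * (x * casimirIdem p j f) = q p ^ (j + n) • (x * casimirIdem p j f) := by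
  rw [← mul_assoc, hx, smul_mul_assoc, mul_assoc, KK_mul_casimirIdem hp, mul_smul_comm, smul_smul,
    add_comm, zpow_add₀ (q_ne_zero p)]

theorem sub_algebraMap_mul_mul_casimirIdem (hp : 2 ≤ p) (c : ℂ) (x : Uq p) (j : ℤ) (f : ℂ[X]) :
    (casimir p - algebraMap ℂ _ c) * (x * casimirIdem p j f)
      = x * casimirIdem p j ((X - C c) * f) := by
  have hc : aeval (casimir p) (X - C c) = casimir p - algebraMap ℂ _ c := by simp
  rw [← aeval_casimir_mul_casimirIdem, ← mul_assoc, ← hc, ← (commute_aeval_casimir hp _ x).eq,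
    mul_assoc]

theorem FF_mul_EE_pow_succ_mul_casimirIdem (hp : 2 ≤ p) (a : ℕ) (j : ℤ) (f : ℂ[X]) :
    FF p * (EE p ^ (a + 1) * casimirIdem p j f)
      = EE p ^ a * casimirIdem p j ((X - C (casimirValue p (j + 2 * a + 1))) * f) := by
  rw [pow_succ', mul_assoc,
    FF_mul_EE_mul (((hasWeight_EE p).pow a).KK_mul_mul_casimirIdem hp j f),
    sub_algebraMap_mul_mul_casimirIdem hp]

theorem EE_mul_FF_pow_succ_mul_casimirIdem (hp : 2 ≤ p) (a : ℕ) (j : ℤ) (f : ℂ[X]) :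
    EE p * (FF p ^ (a + 1) * casimirIdem p j f)
      = FF p ^ a * casimirIdem p j ((X - C (casimirValue p (j - 2 * a - 1))) * f) := by
  rw [pow_succ', mul_assoc,
    EE_mul_FF_mul hp (((hasWeight_FF p).pow a).KK_mul_mul_casimirIdem hp j f),
    sub_algebraMap_mul_mul_casimirIdem hp, neg_mul, ← sub_eq_add_neg]

theorem FF_mul_EE_mul_casimirIdem (hp : 2 ≤ p) (j : ℤ) (f : ℂ[X]) :
    FF p * (EE p * casimirIdem p j f)
      = casimirIdem p j ((X - C (casimirValue p (j + 1))) * f) := by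
  simpa using FF_mul_EE_pow_succ_mul_casimirIdem hp 0 j f

theorem EE_mul_FF_mul_casimirIdem (hp : 2 ≤ p) (j : ℤ) (f : ℂ[X]) :
    EE p * (FF p * casimirIdem p j f)
      = casimirIdem p j ((X - C (casimirValue p (j - 1))) * f) := by
  simpa using EE_mul_FF_pow_succ_mul_casimirIdem hp 0 j f

theorem FF_pow_mul_EE_pow_mul_casimirIdem (hp : 2 ≤ p) (n : ℕ) (j : ℤ) (f : ℂ[X]) :
    FF p ^ n * (EE p ^ n * casimirIdem p j f) = casimirIdem p j
      ((∏ i ∈ Finset.range n, (X - C (casimirValue p (j + 2 * i + 1)))) * f) := by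
  induction n generalizing f with
  | zero => simp
  | succ n ih =>
    rw [pow_succ, mul_assoc, FF_mul_EE_pow_succ_mul_casimirIdem hp, ih, Finset.prod_range_succ,
      mul_assoc]

theorem span_pow_mul_casimirIdem (hp : 2 ≤ p) :
    Submodule.span ℂ ({x | ∃ a j f, x = EE p ^ a * casimirIdem p j f} ∪
      {x | ∃ a j f, x = FF p ^ a * casimirIdem p j f}) = ⊤ := by
  set S : Submodule ℂ (Uq p) := Submodule.span ℂ _ with hS
  have hE (a j f) : EE p ^ a * casimirIdem p j f ∈ S :=
    Submodule.subset_span (Or.inl ⟨a, j, f, rfl⟩)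
  have hF (a j f) : FF p ^ a * casimirIdem p j f ∈ S :=
    Submodule.subset_span (Or.inr ⟨a, j, f, rfl⟩)
  refine submodule_eq_top_of_adjoin_eq_top (adjoin_EE_FF_KK hp) ?_ fun y hy x hx => ?_
  · rw [← sum_weightIdem hp]
    exact S.sum_mem fun j _ => by simpa [casimirIdem_one] using hE 0 j 1
  rw [hS] at hx
  induction hx using Submodule.span_induction with
  | zero => rw [mul_zero]; exact S.zero_mem
  | add x₁ x₂ _ _ h₁ h₂ => rw [mul_add]; exact S.add_mem h₁ h₂
  | smul c x _ h => rw [mul_smul_comm]; exact S.smul_mem c h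
  | mem x hx =>
    rcases hx with ⟨a, j, f, rfl⟩ | ⟨a, j, f, rfl⟩ <;> rcases hy with rfl | rfl | rfl
    · rw [← mul_assoc, ← pow_succ']; exact hE (a + 1) j f
    · rcases a with _ | a
      · simpa using hF 1 j f
      · rw [FF_mul_EE_pow_succ_mul_casimirIdem hp]; exact hE a j _
    · rw [((hasWeight_EE p).pow a).KK_mul_mul_casimirIdem hp]; exact S.smul_mem _ (hE a j f)
    · rcases a with _ | a
      · simpa using hE 1 j f
      · rw [EE_mul_FF_pow_succ_mul_casimirIdem hp]; exact hF a j _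
    · rw [← mul_assoc, ← pow_succ']; exact hF (a + 1) j f
    · rw [((hasWeight_FF p).pow a).KK_mul_mul_casimirIdem hp]; exact S.smul_mem _ (hF a j f)

end WeightIdempotents

section SymmetricLinearForms

open Polynomial

variable {p : ℕ} {φ : Uq p →ₗ[ℂ] ℂ}

theorem map_eq_zero_of_KK_mul_ne (hK : ∀ x, φ (KK p * x) = φ (x * KK p)) {x : Uq p} {μ ν : ℂ}
    (hμ : KK p * x = μ • x) (hν : x * KK p = ν • x) (hne : μ ≠ ν) : φ x = 0 := by
  have h := hK x
  rw [hμ, hν, map_smul, map_smul, ← sub_eq_zero, ← sub_smul, smul_eq_mul, mul_eq_zero] at h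
  exact h.resolve_left (sub_ne_zero.mpr hne)

theorem map_pow_mul_casimirIdem_eq_zero (hp : 2 ≤ p) (hK : ∀ x, φ (KK p * x) = φ (x * KK p))
    {x : Uq p} {ε : ℤ} (hε : ε = 1 ∨ ε = -1) (hx : HasWeight (2 * ε) x) (hxp : x ^ p = 0) {a : ℕ}
    (ha : a ≠ 0) (j : ℤ) (f : ℂ[X]) : φ (x ^ a * casimirIdem p j f) = 0 := by
  rcases lt_or_ge a p with hap | hap
  · refine map_eq_zero_of_KK_mul_ne hK ((hx.pow a).KK_mul_mul_casimirIdem hp j f)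
      (ν := q p ^ j) (by rw [mul_assoc, casimirIdem_mul_KK hp, mul_smul_comm]) fun h => ?_
    have hdvd : 2 * (p : ℤ) ∣ 2 * a := by
      have := (q_zpow_eq_zpow_iff hp _ _).mp h
      rcases hε with rfl | rfl
      · simpa using this
      · simpa using dvd_neg.mpr this
    have := Int.le_of_dvd (by lia) hdvd
    lia
  · rw [pow_eq_zero_of_le hap hxp, zero_mul, map_zero]

theorem map_EE_pow_mul_casimirIdem (hp : 2 ≤ p) (hK : ∀ x, φ (KK p * x) = φ (x * KK p)) {a : ℕ}
    (ha : a ≠ 0) (j : ℤ) (f : ℂ[X]) : φ (EE p ^ a * casimirIdem p j f) = 0 :=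
  map_pow_mul_casimirIdem_eq_zero hp hK (Or.inl rfl) (hasWeight_EE p) (EE_pow_self p) ha j f

theorem map_FF_pow_mul_casimirIdem (hp : 2 ≤ p) (hK : ∀ x, φ (KK p * x) = φ (x * KK p)) {a : ℕ}
    (ha : a ≠ 0) (j : ℤ) (f : ℂ[X]) : φ (FF p ^ a * casimirIdem p j f) = 0 :=
  map_pow_mul_casimirIdem_eq_zero hp hK (Or.inr rfl) (hasWeight_FF p) (FF_pow_self p) ha j f

theorem eq_zero_of_map_casimirIdem_eq_zero (hp : 2 ≤ p)
    (hK : ∀ x, φ (KK p * x) = φ (x * KK p)) (hφ : ∀ j f, φ (casimirIdem p j f) = 0) : φ = 0 := by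
  refine LinearMap.ext_on (span_pow_mul_casimirIdem hp) ?_
  rintro _ (⟨a, j, f, rfl⟩ | ⟨a, j, f, rfl⟩) <;> rcases eq_or_ne a 0 with rfl | ha
  · simpa using hφ j f
  · exact map_EE_pow_mul_casimirIdem hp hK ha j f
  · simpa using hφ j f
  · exact map_FF_pow_mul_casimirIdem hp hK ha j f

theorem map_mul_comm_of_span (hp : 2 ≤ p) {y : Uq p}
    (hE : ∀ a j f, φ (y * (EE p ^ a * casimirIdem p j f)) = φ (EE p ^ a * casimirIdem p j f * y))
    (hF : ∀ a j f, φ (y * (FF p ^ a * casimirIdem p j f)) = φ (FF p ^ a * casimirIdem p j f * y))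
    (x : Uq p) : φ (y * x) = φ (x * y) := by
  refine LinearMap.congr_fun (LinearMap.ext_on (span_pow_mul_casimirIdem hp) ?_ :
    φ ∘ₗ LinearMap.mulLeft ℂ y = φ ∘ₗ LinearMap.mulRight ℂ y) x
  rintro _ (⟨a, j, f, rfl⟩ | ⟨a, j, f, rfl⟩)
  · exact hE a j f
  · exact hF a j f

theorem map_EE_mul_comm (hp : 2 ≤ p) (hK : ∀ x, φ (KK p * x) = φ (x * KK p))
    (hC : ∀ k f, φ (casimirIdem p (k - 1) ((X - C (casimirValue p k)) * f))
      = φ (casimirIdem p (k + 1) ((X - C (casimirValue p k)) * f))) (x : Uq p) :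
    φ (EE p * x) = φ (x * EE p) := by
  have hE (a j f) :
      φ (EE p * (EE p ^ a * casimirIdem p j f)) = φ (EE p ^ a * casimirIdem p j f * EE p) := by
    rw [mul_assoc, casimirIdem_mul_EE hp, ← mul_assoc, ← mul_assoc, ← pow_succ', ← pow_succ,
      map_EE_pow_mul_casimirIdem hp hK a.succ_ne_zero,
      map_EE_pow_mul_casimirIdem hp hK a.succ_ne_zero]
  refine map_mul_comm_of_span hp hE (fun a j f => ?_) x
  rcases a with _ | a
  · simpa using hE 0 j f
  have hFE : FF p ^ (a + 1) * casimirIdem p j f * EE p = FF p ^ a *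
      casimirIdem p (j - 2) ((X - C (casimirValue p (j - 1))) * f) := by
    rw [mul_assoc, casimirIdem_mul_EE hp, pow_succ, mul_assoc, FF_mul_EE_mul_casimirIdem hp,
      show j - 2 + 1 = j - 1 by ring]
  rw [EE_mul_FF_pow_succ_mul_casimirIdem hp, hFE]
  rcases eq_or_ne a 0 with rfl | ha
  · have h := hC (j - 1) f
    rw [sub_add_cancel, show j - 1 - 1 = j - 2 by ring] at h
    simpa using h.symm
  · rw [map_FF_pow_mul_casimirIdem hp hK ha, map_FF_pow_mul_casimirIdem hp hK ha]

theorem map_FF_mul_comm (hp : 2 ≤ p) (hK : ∀ x, φ (KK p * x) = φ (x * KK p))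
    (hC : ∀ k f, φ (casimirIdem p (k - 1) ((X - C (casimirValue p k)) * f))
      = φ (casimirIdem p (k + 1) ((X - C (casimirValue p k)) * f))) (x : Uq p) :
    φ (FF p * x) = φ (x * FF p) := by
  have hF (a j f) :
      φ (FF p * (FF p ^ a * casimirIdem p j f)) = φ (FF p ^ a * casimirIdem p j f * FF p) := by
    rw [mul_assoc, casimirIdem_mul_FF hp, ← mul_assoc, ← mul_assoc, ← pow_succ', ← pow_succ,
      map_FF_pow_mul_casimirIdem hp hK a.succ_ne_zero,
      map_FF_pow_mul_casimirIdem hp hK a.succ_ne_zero]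
  refine map_mul_comm_of_span hp (fun a j f => ?_) hF x
  rcases a with _ | a
  · simpa using hF 0 j f
  have hEF : EE p ^ (a + 1) * casimirIdem p j f * FF p = EE p ^ a *
      casimirIdem p (j + 2) ((X - C (casimirValue p (j + 1))) * f) := by
    rw [mul_assoc, casimirIdem_mul_FF hp, pow_succ, mul_assoc, EE_mul_FF_mul_casimirIdem hp,
      show j + 2 - 1 = j + 1 by ring]
  rw [FF_mul_EE_pow_succ_mul_casimirIdem hp, hEF]
  rcases eq_or_ne a 0 with rfl | ha
  · have h := hC (j + 1) f
    rw [add_sub_cancel_right, show j + 1 + 1 = j + 2 by ring] at h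
    simpa using h
  · rw [map_EE_pow_mul_casimirIdem hp hK ha, map_EE_pow_mul_casimirIdem hp hK ha]

theorem isSLF_iff (hp : 2 ≤ p) : IsSLF p φ ↔ (∀ x, φ (KK p * x) = φ (x * KK p)) ∧
    ∀ k f, φ (casimirIdem p (k - 1) ((X - C (casimirValue p k)) * f))
      = φ (casimirIdem p (k + 1) ((X - C (casimirValue p k)) * f)) := by
  refine ⟨fun hφ => ⟨fun x => hφ _ _, fun k f => ?_⟩, fun ⟨hK, hC⟩ => ?_⟩
  · have hFE := FF_mul_EE_mul_casimirIdem hp (k - 1) f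
    have hEF := EE_mul_FF_mul_casimirIdem hp (k + 1) f
    rw [sub_add_cancel] at hFE
    rw [add_sub_cancel_right] at hEF
    rw [← hFE, ← hEF, hφ, mul_assoc, casimirIdem_mul_FF hp, show k - 1 + 2 = k + 1 by ring]
  · refine fun x y => map_mul_comm_of_adjoin (adjoin_EE_FF_KK hp) ?_ x y
    rintro _ (rfl | rfl | rfl)
    · exact map_EE_mul_comm hp hK hC
    · exact map_FF_mul_comm hp hK hC
    · exact hK

end SymmetricLinearForms

section UpperBound

open Polynomial

variable {p : ℕ} {φ : Uq p →ₗ[ℂ] ℂ}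

/-- The Lagrange polynomial that is `1` at the Casimir value `c_k` and vanishes at `c_m` for
`m ≠ k`, `0 ≤ m ≤ p`. -/
def casimirLagrange (p k : ℕ) : ℂ[X] :=
  Lagrange.basis (Finset.range (p + 1)) (fun m : ℕ => casimirValue p m) k

theorem eval_casimirValue_casimirLagrange (hp : 2 ≤ p) {k m : ℕ} (hk : k ≤ p) (hm : m ≤ p) :
    (casimirLagrange p k).eval (casimirValue p m) = if m = k then 1 else 0 := by
  split_ifs with hmk
  · subst hmk
    exact Lagrange.eval_basis_self (casimirValue_injOn hp) (Finset.mem_range_succ_iff.mpr hm)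
  · exact Lagrange.eval_basis_of_ne (v := fun m : ℕ => casimirValue p m) (Ne.symm hmk)
      (Finset.mem_range_succ_iff.mpr hm)

/-- The difference of the values of `φ` on the idempotents of weights `q^{k+1}` and `q^{k-1}`. For
a symmetric `φ` it governs how `φ (f(C) e_j)` changes with the weight `q^j`. -/
def jump (φ : Uq p →ₗ[ℂ] ℂ) (k : ℤ) : ℂ := φ (weightIdem p (k + 1)) - φ (weightIdem p (k - 1))

theorem jump_periodic (hp : 2 ≤ p) (φ : Uq p →ₗ[ℂ] ℂ) : Function.Periodic (jump φ) (2 * p) :=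
  fun k => by
    rw [jump, add_right_comm, weightIdem_periodic hp, add_sub_right_comm, weightIdem_periodic hp,
      jump]

theorem map_casimirIdem_add_one_sub (hp : 2 ≤ p) (hφ : IsSLF p φ) (k : ℤ) (f : ℂ[X]) :
    φ (casimirIdem p (k + 1) f) - φ (casimirIdem p (k - 1) f)
      = f.eval (casimirValue p k) * jump φ k := by
  have hdiv : f = f.eval (casimirValue p k) • 1 +
      (X - C (casimirValue p k)) * (f /ₘ (X - C (casimirValue p k))) := by
    rw [smul_eq_C_mul, mul_one, ← modByMonic_X_sub_C_eq_C_eval, modByMonic_add_div]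
  have hC := ((isSLF_iff hp).mp hφ).2 k (f /ₘ (X - C (casimirValue p k)))
  rw [jump, hdiv]
  simp only [map_add, map_smul, casimirIdem_one, hC, eval_add, eval_smul, eval_mul, eval_sub,
    eval_one, eval_X, eval_C, smul_eq_mul]
  ring

theorem sum_jump_eq_zero (hp : 2 ≤ p) (hφ : IsSLF p φ) (f : ℂ[X]) :
    ∑ i ∈ Finset.range (2 * p),
      f.eval (casimirValue p (i + 1 - p)) * jump φ (i + 1 - p) = 0 := by
  let g (i : ℕ) : ℂ := φ (casimirIdem p (i - p) f) + φ (casimirIdem p (i + 1 - p) f)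
  have hg (i : ℕ) :
      f.eval (casimirValue p (i + 1 - p)) * jump φ (i + 1 - p) = g (i + 1) - g i := by
    rw [← map_casimirIdem_add_one_sub hp hφ]
    simp only [g, Nat.cast_add, Nat.cast_one]
    ring_nf
  have hg0 : g (2 * p) = g 0 := by
    have h0 := casimirIdem_periodic hp (-p)
    have h1 := casimirIdem_periodic hp (1 - p)
    simp only [g, Nat.cast_mul, Nat.cast_ofNat, Nat.cast_zero, zero_sub, zero_add, ← h0, ← h1]
    ring_nf
  rw [Finset.sum_congr rfl fun i _ => hg i, Finset.sum_range_sub, hg0, sub_self]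

theorem jump_eq_zero (hp : 2 ≤ p) (hφ : IsSLF p φ)
    (hneg : ∀ k : ℤ, -p < k → k < 0 → jump φ k = 0) (k : ℤ) : jump φ k = 0 := by
  have hnonneg (m : ℕ) (hm : m ≤ p) : jump φ m = 0 := by
    have hsum := sum_jump_eq_zero hp hφ (casimirLagrange p m)
    rw [show 2 * p = (p - 1) + (p + 1) by lia, Finset.sum_range_add,
      Finset.sum_eq_zero (s := Finset.range (p - 1)), zero_add] at hsum
    · have hcast (i : ℕ) : (((p - 1 + i : ℕ) : ℤ) + 1 - p) = (i : ℤ) := by lia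
      simp only [hcast] at hsum
      rw [Finset.sum_eq_single_of_mem m (Finset.mem_range_succ_iff.mpr hm),
        eval_casimirValue_casimirLagrange hp hm hm, if_pos rfl, one_mul] at hsum
      · exact hsum
      · intro i hi him
        rw [eval_casimirValue_casimirLagrange hp hm (Finset.mem_range_succ_iff.mp hi), if_neg him,
          zero_mul]
    · intro i hi
      have := Finset.mem_range.mp hi
      rw [hneg _ (by lia) (by lia), mul_zero]
  obtain ⟨m, ⟨hm, hm'⟩, hkm⟩ :=
    (jump_periodic hp φ).exists_mem_Ioc (by lia) k (-p)
  rw [hkm]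
  rcases lt_or_ge m 0 with h | h
  · exact hneg m hm h
  · lift m to ℕ using h
    exact hnonneg m (by lia)

theorem eq_zero_of_jump_eq_zero (hp : 2 ≤ p) (hφ : IsSLF p φ) (hjump : ∀ k, jump φ k = 0)
    (h0 : ∀ i < p, φ (casimirIdem p 0 (X ^ i)) = 0)
    (h1 : ∀ i < p, φ (casimirIdem p 1 (X ^ i)) = 0) : φ = 0 := by
  have hroot (j : ℤ) (hj : ∀ i < p, φ (casimirIdem p j (X ^ i)) = 0) (f : ℂ[X]) :
      φ (casimirIdem p j f) = 0 := by
    let Ψ : ℂ[X] := ∏ i ∈ Finset.range p, (X - C (casimirValue p (j + 2 * i + 1)))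
    have hdeg : Ψ.natDegree = p := by simp [Ψ]
    refine LinearMap.congr_fun (eq_zero_of_map_X_pow_eq_zero (Ψ := Ψ)
      (L := φ ∘ₗ casimirIdem p j) (monic_prod_X_sub_C _ _) (fun f => ?_) fun i hi => ?_) f
    · rw [LinearMap.comp_apply, ← FF_pow_mul_EE_pow_mul_casimirIdem hp, FF_pow_self, zero_mul,
        map_zero]
    · exact hj i (hdeg ▸ hi)
  have hperiodic (f : ℂ[X]) : Function.Periodic (fun j => φ (casimirIdem p j f)) 2 := fun j => by
    have h := map_casimirIdem_add_one_sub hp hφ (j + 1) f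
    rw [hjump, mul_zero, add_sub_cancel_right, sub_eq_zero, add_assoc] at h
    exact h
  refine eq_zero_of_map_casimirIdem_eq_zero hp (fun x => hφ _ _) fun j f => ?_
  obtain ⟨m, hm, hjm⟩ := (hperiodic f).exists_mem_Ico two_pos j 0
  rw [hjm]
  obtain rfl | rfl : m = 0 ∨ m = 1 := by have := Set.mem_Ico.mp hm; lia
  · exact hroot 0 h0 f
  · exact hroot 1 h1 f

/-- Elements of `Ū_q` on which a symmetric linear form is determined by its values; there are as
many of them as forms in the GTA family. -/
def testElement (p : ℕ) : GTAidx p → Uq p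
  | .inl (true, i) => casimirIdem p 0 (X ^ (i : ℕ))
  | .inl (false, i) => casimirIdem p 1 (X ^ (i : ℕ))
  | .inr t => weightIdem p (-(t + 1 : ℤ) + 1) - weightIdem p (-(t + 1 : ℤ) - 1)

theorem eq_zero_of_map_testElement_eq_zero (hp : 2 ≤ p) (hφ : IsSLF p φ)
    (hx : ∀ i, φ (testElement p i) = 0) : φ = 0 := by
  refine eq_zero_of_jump_eq_zero hp hφ (jump_eq_zero hp hφ fun k hk hk0 => ?_)
    (fun i hi => hx (.inl (true, ⟨i, hi⟩))) (fun i hi => hx (.inl (false, ⟨i, hi⟩)))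
  have ht := hx (.inr ⟨(-k - 1).toNat, by lia⟩)
  rw [testElement, map_sub] at ht
  rw [jump, ← ht]
  congr <;> lia

end UpperBound

section WeightVectors

open Polynomial

variable {p : ℕ} {M : Type*} [AddCommGroup M] [Module ℂ M] {ρ : Uq p →ₐ[ℂ] Module.End ℂ M}

theorem casimir_apply_of_FF_EE_apply (hp : 2 ≤ p) {α : ℂ} (hα : α * α = 1) {s i : ℤ} {v w : M}
    (hv : ρ (KK p) v = (α * q p ^ (s - 1 - 2 * i)) • v)
    (hFE : ρ (FF p) (ρ (EE p) v) = (α * qi p i * qi p (s - i)) • v + w) :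
    ρ (casimir p) v = (α * casimirValue p s) • v + w := by
  rw [casimir_apply_eq_FF_EE_add hα hv, hFE, ← qi_mul_qi_sub_add_casimirValue hp i s,
    show s - 1 - 2 * i + 1 = s - 2 * i by ring]
  module

theorem casimirIdem_apply_of_weight (hp : 2 ≤ p) {v w : M} {μ c : ℂ} (hμ : μ ^ (2 * p) = 1)
    (hK : ρ (KK p) v = μ • v) (hv : ρ (casimir p) v = c • v + w) (hw : ρ (casimir p) w = c • w)
    (j : ℤ) (f : ℂ[X]) : ρ (casimirIdem p j f) v =
      if μ = q p ^ j then f.eval c • v + f.derivative.eval c • w else 0 := by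
  have hn : ((2 * p : ℕ) : ℂ) ≠ 0 := Nat.cast_ne_zero.mpr (by lia)
  rw [casimirIdem_apply, map_mul, Module.End.mul_apply, weightIdem, map_spectralIdem,
    spectralIdem_apply_of_apply_eq_smul hn hK (q_zpow_pow_two_mul hp j) hμ, apply_ite (ρ _),
    map_zero, ← aeval_algHom_apply, aeval_apply_of_apply_eq_smul_add hv hw]

end WeightVectors

section MatrixRepresentations

open Matrix

variable {p : ℕ} {n : Type*} [Fintype n] [DecidableEq n] (ρ : Uq p →ₐ[ℂ] Matrix n n ℂ)

/-- The action on column vectors defined by a matrix representation of `Ū_q`. -/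
def act : Uq p →ₐ[ℂ] Module.End ℂ (n → ℂ) :=
  (toLinAlgEquiv' : Matrix n n ℂ ≃ₐ[ℂ] _).toAlgHom.comp ρ

theorem act_apply (x : Uq p) (v : n → ℂ) : act ρ x v = ρ x *ᵥ v := rfl

theorem act_single_apply (x : Uq p) (i j : n) : act ρ x (Pi.single j 1) i = ρ x i j := by
  rw [act_apply, mulVec_single_one, col_apply]

end MatrixRepresentations

section SimpleModules

open Matrix Polynomial

variable {p s : ℕ} {α : ℂ}

theorem XF_mulVec_XE_mulVec_single (i : Fin s) :
    XF s *ᵥ (XE p α s *ᵥ Pi.single i 1)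
      = (α * qi p (i : ℕ) * qi p ((s : ℤ) - (i : ℕ))) • Pi.single i 1 := by
  rcases i with ⟨_ | i, hi⟩
  · have hE : XE p α s *ᵥ Pi.single ⟨0, hi⟩ 1 = 0 := by
      ext k
      simp [XE]
    simp [hE, qi]
  · have hE : XE p α s *ᵥ Pi.single ⟨i + 1, hi⟩ 1 =
        (α * qi p (i + 1 : ℕ) * qi p ((s : ℤ) - (i + 1 : ℕ))) • Pi.single ⟨i, by lia⟩ 1 := by
      ext k
      simp [XE, Pi.single_apply, Fin.ext_iff]
    have hF : XF s *ᵥ Pi.single ⟨i, by lia⟩ 1 = Pi.single ⟨i + 1, hi⟩ 1 := by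
      ext k
      simp [XF, Pi.single_apply, Fin.ext_iff]
    rw [hE, mulVec_smul, hF]

end SimpleModules

section ProjectiveModules

open Matrix

variable {p s : ℕ} {α : ℂ}

/-- The index of the basis vector `b_i` of `P^α(s)`. -/
abbrev PIdx.b (i : Fin s) : PIdx p s := .inl i

/-- The index of the basis vector `x_j` of `P^α(s)`. -/
abbrev PIdx.x (j : Fin (p - s)) : PIdx p s := .inr (.inl j)

/-- The index of the basis vector `a_l` of `P^α(s)`. -/
abbrev PIdx.a (l : Fin s) : PIdx p s := .inr (.inr (.inr l))

theorem PE_mulVec_single_b_succ {i : ℕ} (hi : i + 1 < s) :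
    PE p α s *ᵥ Pi.single (PIdx.b ⟨i + 1, hi⟩) 1 =
      (α * qi p (i + 1 : ℕ) * qi p ((s : ℤ) - (i + 1 : ℕ))) • Pi.single (PIdx.b ⟨i, by lia⟩) 1
        + Pi.single (PIdx.a ⟨i, by lia⟩) 1 := by
  ext (k | k | k | k) <;> simp [PE, Pi.single_apply, Fin.ext_iff]

theorem PE_mulVec_single_b_zero (hs : 0 < s) (hsp : s < p) :
    PE p α s *ᵥ Pi.single (PIdx.b ⟨0, hs⟩) 1 = Pi.single (PIdx.x ⟨p - s - 1, by lia⟩) 1 := by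
  have hlast (k : Fin (p - s)) : (k : ℕ) + 1 = p - s ↔ (k : ℕ) = p - s - 1 := by lia
  ext (k | k | k | k) <;> simp [PE, Pi.single_apply, Fin.ext_iff, hlast]

theorem PE_mulVec_single_a_succ {i : ℕ} (hi : i + 1 < s) :
    PE p α s *ᵥ Pi.single (PIdx.a ⟨i + 1, hi⟩) 1 =
      (α * qi p (i + 1 : ℕ) * qi p ((s : ℤ) - (i + 1 : ℕ))) •
        Pi.single (PIdx.a ⟨i, by lia⟩) 1 := by
  ext (k | k | k | k) <;> simp [PE, Pi.single_apply, Fin.ext_iff]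

theorem PE_mulVec_single_a_zero (hs : 0 < s) :
    PE p α s *ᵥ Pi.single (PIdx.a ⟨0, hs⟩) 1 = 0 := by
  ext (k | k | k | k) <;> simp [PE]

theorem PF_mulVec_single_b {i : ℕ} (hi : i + 1 < s) :
    PF p s *ᵥ Pi.single (PIdx.b ⟨i, by lia⟩) 1 = Pi.single (PIdx.b ⟨i + 1, hi⟩) 1 := by
  have his : i + 1 ≠ s := by lia
  ext (k | k | k | k) <;> simp [PF, Pi.single_apply, Fin.ext_iff, his]

theorem PF_mulVec_single_x_last (hs : 0 < s) (hsp : s < p) :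
    PF p s *ᵥ Pi.single (PIdx.x ⟨p - s - 1, by lia⟩) 1 = Pi.single (PIdx.a ⟨0, hs⟩) 1 := by
  have hlast : p - s - 1 + 1 = p - s := by lia
  have hk (k : Fin (p - s)) : (k : ℕ) ≠ p - s := by lia
  ext (k | k | k | k) <;> simp [PF, Pi.single_apply, Fin.ext_iff, hlast, hk]

theorem PF_mulVec_single_a {i : ℕ} (hi : i + 1 < s) :
    PF p s *ᵥ Pi.single (PIdx.a ⟨i, by lia⟩) 1 = Pi.single (PIdx.a ⟨i + 1, hi⟩) 1 := by
  ext (k | k | k | k) <;> simp [PF, Pi.single_apply, Fin.ext_iff]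

theorem PF_mulVec_PE_mulVec_single_b (hsp : s < p) (i : Fin s) :
    PF p s *ᵥ (PE p α s *ᵥ Pi.single (PIdx.b i) 1)
      = (α * qi p (i : ℕ) * qi p ((s : ℤ) - (i : ℕ))) • Pi.single (PIdx.b i) 1
        + Pi.single (PIdx.a i) 1 := by
  rcases i with ⟨_ | i, hi⟩
  · rw [PE_mulVec_single_b_zero hi hsp, PF_mulVec_single_x_last hi hsp]
    simp [qi]
  · rw [PE_mulVec_single_b_succ, mulVec_add, mulVec_smul, PF_mulVec_single_b, PF_mulVec_single_a]

theorem PF_mulVec_PE_mulVec_single_a (i : Fin s) :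
    PF p s *ᵥ (PE p α s *ᵥ Pi.single (PIdx.a i) 1)
      = (α * qi p (i : ℕ) * qi p ((s : ℤ) - (i : ℕ))) • Pi.single (PIdx.a i) 1 := by
  rcases i with ⟨_ | i, hi⟩
  · rw [PE_mulVec_single_a_zero hi]
    simp [qi]
  · rw [PE_mulVec_single_a_succ, mulVec_smul, PF_mulVec_single_a]

end ProjectiveModules

section WeightMultiplicities

variable {p : ℕ}

/-- The number, as a complex number, of `i < n` with `μ q^{-2i} = ν`. It is the multiplicity of the
`K`-weight `ν` in a string of `n` weights with highest weight `μ`. -/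
def weightMult (p n : ℕ) (μ ν : ℂ) : ℂ :=
  ∑ i ∈ Finset.range n, if μ * q p ^ (-2 * (i : ℤ)) = ν then 1 else 0

theorem weightMult_add (m n : ℕ) (μ ν : ℂ) : weightMult p (m + n) μ ν =
    weightMult p m μ ν + weightMult p n (μ * q p ^ (-2 * (m : ℤ))) ν := by
  simp only [weightMult, Finset.sum_range_add, Nat.cast_add, mul_add, zpow_add₀ (q_ne_zero p),
    mul_assoc]

theorem weightMult_mul_mul (n : ℕ) {c : ℂ} (hc : c ≠ 0) (μ ν : ℂ) :
    weightMult p n (μ * c) (ν * c) = weightMult p n μ ν := by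
  simp only [weightMult, mul_right_comm μ c, mul_left_inj' hc]

theorem weightMult_self_mul_q_zpow_two (hp : 2 ≤ p) (μ ν : ℂ) :
    weightMult p p μ (ν * q p ^ (2 : ℤ)) = weightMult p p μ ν := by
  have hq2 := zpow_ne_zero 2 (q_ne_zero p)
  have hq : q p ^ (-2 * (p : ℤ)) = 1 := (q_zpow_eq_one_iff hp _).mpr ⟨-1, by ring⟩
  have hshift : μ * q p ^ (2 : ℤ) * q p ^ (-2 * ((1 : ℕ) : ℤ)) = μ := by
    rw [mul_assoc, ← zpow_add₀ (q_ne_zero p)]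
    simp
  have hlast := weightMult_add (p := p) p 1 (μ * q p ^ (2 : ℤ)) (ν * q p ^ (2 : ℤ))
  rw [add_comm p 1, weightMult_add, hshift, hq, mul_one, add_comm, add_left_inj,
    weightMult_mul_mul p hq2] at hlast
  exact hlast

theorem weightMult_self_ne_zero {n : ℕ} (hn : n ≠ 0) (μ : ℂ) : weightMult p n μ μ ≠ 0 := by
  rw [weightMult, Finset.sum_boole, Nat.cast_ne_zero, Finset.card_ne_zero]
  exact ⟨0, by simpa using Nat.pos_of_ne_zero hn⟩

end WeightMultiplicities

section Values

open Matrix Polynomial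

variable {p s : ℕ} {α : ℂ}

theorem mul_q_zpow_pow_two_mul (hp : 2 ≤ p) (hα : α * α = 1) (k : ℤ) :
    (α * q p ^ k) ^ (2 * p) = 1 := by
  rw [mul_pow, q_zpow_pow_two_mul hp, pow_mul, sq, hα, one_pow, one_mul]

theorem sum_ite_weight_eq_mul_weightMult (α c ν : ℂ) (s : ℕ) :
    ∑ i : Fin s, (if α * q p ^ ((s : ℤ) - 1 - 2 * (i : ℕ)) = ν then c else 0)
      = c * weightMult p s (α * q p ^ ((s : ℤ) - 1)) ν := by
  rw [weightMult, Finset.mul_sum, Fin.sum_univ_eq_sum_range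
    (fun i => if α * q p ^ ((s : ℤ) - 1 - 2 * (i : ℕ)) = ν then c else 0)]
  refine Finset.sum_congr rfl fun i _ => ?_
  rw [mul_assoc, ← zpow_add₀ (q_ne_zero p), neg_mul, ← sub_eq_add_neg, mul_ite, mul_one, mul_zero]

theorem chiOf_casimirIdem (hp : 2 ≤ p) (hα : α * α = 1) {ρ : Uq p →ₐ[ℂ] Matrix (Fin s) (Fin s) ℂ}
    (hρ : ρ (KK p) = XK p α s ∧ ρ (EE p) = XE p α s ∧ ρ (FF p) = XF s) (j : ℤ) (f : ℂ[X]) :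
    chiOf p ρ (casimirIdem p j f) =
      f.eval (α * casimirValue p s) * weightMult p s (α * q p ^ ((s : ℤ) - 1)) (q p ^ j) := by
  obtain ⟨hK, hE, hF⟩ := hρ
  have hdiag (i : Fin s) : ρ (casimirIdem p j f) i i =
      if α * q p ^ ((s : ℤ) - 1 - 2 * (i : ℕ)) = q p ^ j then f.eval (α * casimirValue p s)
      else 0 := by
    have hKv : act ρ (KK p) (Pi.single i 1) =
        (α * q p ^ ((s : ℤ) - 1 - 2 * (i : ℕ))) • Pi.single i 1 := by
      rw [act_apply, hK, XK, diagonal_mulVec_single, ← Pi.single_smul, smul_eq_mul]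
    have hC := casimir_apply_of_FF_EE_apply hp hα (w := 0) hKv
      (by rw [act_apply, act_apply, hE, hF, XF_mulVec_XE_mulVec_single, add_zero])
    rw [← act_single_apply, casimirIdem_apply_of_weight hp (mul_q_zpow_pow_two_mul hp hα _) hKv hC
      (by rw [map_zero, smul_zero])]
    split_ifs <;> simp
  rw [← sum_ite_weight_eq_mul_weightMult, ← Finset.sum_congr rfl fun i _ => hdiag i]
  rfl

theorem sum_entry_casimirIdem (hp : 2 ≤ p) (hα : α * α = 1) (hsp : s < p)
    {ρ : Uq p →ₐ[ℂ] Matrix (PIdx p s) (PIdx p s) ℂ}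
    (hρ : ρ (KK p) = PK p α s ∧ ρ (EE p) = PE p α s ∧ ρ (FF p) = PF p s) (j : ℤ) (f : ℂ[X]) :
    ∑ i : Fin s, ρ (casimirIdem p j f) (PIdx.a i) (PIdx.b i) =
      f.derivative.eval (α * casimirValue p s) *
        weightMult p s (α * q p ^ ((s : ℤ) - 1)) (q p ^ j) := by
  obtain ⟨hK, hE, hF⟩ := hρ
  have hentry (i : Fin s) : ρ (casimirIdem p j f) (PIdx.a i) (PIdx.b i) =
      if α * q p ^ ((s : ℤ) - 1 - 2 * (i : ℕ)) = q p ^ j then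
        f.derivative.eval (α * casimirValue p s) else 0 := by
    have hKv {v : PIdx p s} (hv : PKdiag p α s v = α * q p ^ ((s : ℤ) - 1 - 2 * (i : ℕ))) :
        act ρ (KK p) (Pi.single v 1) =
          (α * q p ^ ((s : ℤ) - 1 - 2 * (i : ℕ))) • Pi.single v 1 := by
      rw [act_apply, hK, PK, diagonal_mulVec_single, ← Pi.single_smul, smul_eq_mul, hv]
    have hCb := casimir_apply_of_FF_EE_apply hp hα (hKv (v := PIdx.b i) rfl)
      (by rw [act_apply, act_apply, hE, hF, PF_mulVec_PE_mulVec_single_b hsp])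
    have hCa := casimir_apply_of_FF_EE_apply hp hα (w := 0) (hKv (v := PIdx.a i) rfl)
      (by rw [act_apply, act_apply, hE, hF, PF_mulVec_PE_mulVec_single_a, add_zero])
    rw [← act_single_apply, casimirIdem_apply_of_weight hp (mul_q_zpow_pow_two_mul hp hα _)
      (hKv rfl) hCb (by rw [hCa, add_zero])]
    split_ifs <;> simp
  rw [← sum_ite_weight_eq_mul_weightMult, ← Finset.sum_congr rfl fun i _ => hentry i]

end Values

section BasisForms

open Polynomial

variable {p : ℕ} {ρX : (α : ℂ) → (s : ℕ) → (Uq p →ₐ[ℂ] Matrix (Fin s) (Fin s) ℂ)}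
  {ρP : (α : ℂ) → (s : ℕ) → (Uq p →ₐ[ℂ] Matrix (PIdx p s) (PIdx p s) ℂ)}

theorem GOf_apply (ρP : (α : ℂ) → (s : ℕ) → (Uq p →ₐ[ℂ] Matrix (PIdx p s) (PIdx p s) ℂ)) (s : ℕ)
    (x : Uq p) : GOf p ρP s x = ∑ i : Fin s, ρP 1 s x (PIdx.a i) (PIdx.b i) +
      ∑ i : Fin (p - s), ρP (-1) (p - s) x (PIdx.a i) (PIdx.b i) := by
  simp only [GOf, LinearMap.add_apply, LinearMap.sum_apply]
  rfl

theorem neg_q_zpow (hp : 2 ≤ p) (k : ℤ) : -q p ^ k = q p ^ (p + k) := by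
  rw [zpow_add₀ (q_ne_zero p), q_zpow_self hp, neg_one_mul]

theorem GOf_casimirIdem (hp : 2 ≤ p) (hP : IsPRep p ρP) {s : ℕ} (hs : 1 ≤ s) (hsp : s ≤ p - 1)
    (j : ℤ) (f : ℂ[X]) : GOf p ρP s (casimirIdem p j f) =
      f.derivative.eval (casimirValue p s) * weightMult p p (q p ^ ((s : ℤ) - 1)) (q p ^ j) := by
  have hweight : -q p ^ ((p - s : ℕ) - 1 : ℤ) = q p ^ ((s : ℤ) - 1) * q p ^ (-2 * (s : ℤ)) := by
    rw [neg_q_zpow hp, ← zpow_add₀ (q_ne_zero p), q_zpow_eq_zpow_iff hp]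
    exact ⟨1, by lia⟩
  have hvalue : -casimirValue p (p - s : ℕ) = casimirValue p s := by
    rw [Nat.cast_sub (by lia), neg_casimirValue_sub hp]
  rw [GOf_apply, sum_entry_casimirIdem hp (one_mul 1) (by lia) (hP 1 (.inl rfl) s hs hsp),
    sum_entry_casimirIdem hp (by norm_num) (by lia)
      (hP (-1) (.inr rfl) (p - s) (by lia) (by lia)), one_mul, one_mul, neg_one_mul, neg_one_mul,
    hvalue, hweight, ← mul_add, ← weightMult_add, Nat.add_sub_cancel' (by lia)]

theorem isSLF_chiOf {n : Type} [Fintype n] [DecidableEq n] (ρ : Uq p →ₐ[ℂ] Matrix n n ℂ) :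
    IsSLF p (chiOf p ρ) := fun x y => by
  simpa [chiOf] using Matrix.trace_mul_comm (ρ x) (ρ y)

theorem entry_KK_mul {s : ℕ} {α : ℂ} {ρ : Uq p →ₐ[ℂ] Matrix (PIdx p s) (PIdx p s) ℂ}
    (hK : ρ (KK p) = PK p α s) (x : Uq p) (i : Fin s) :
    ρ (KK p * x) (PIdx.a i) (PIdx.b i) = ρ (x * KK p) (PIdx.a i) (PIdx.b i) := by
  rw [map_mul, map_mul, hK, PK, Matrix.diagonal_mul, Matrix.mul_diagonal, mul_comm]
  rfl

theorem isSLF_GOf (hp : 2 ≤ p) (hP : IsPRep p ρP) {s : ℕ} (hs : 1 ≤ s) (hsp : s ≤ p - 1) :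
    IsSLF p (GOf p ρP s) := by
  refine (isSLF_iff hp).mpr ⟨fun x => ?_, fun k f => ?_⟩
  · simp only [GOf_apply, entry_KK_mul (hP 1 (.inl rfl) s hs hsp).1,
      entry_KK_mul (hP (-1) (.inr rfl) (p - s) (by lia) (by lia)).1]
  · rw [GOf_casimirIdem hp hP hs hsp, GOf_casimirIdem hp hP hs hsp,
      show k + 1 = k - 1 + 2 by ring, zpow_add₀ (q_ne_zero p), weightMult_self_mul_q_zpow_two hp]

theorem GTA_mem_SLFsub (hp : 2 ≤ p) (ρX) (hP : IsPRep p ρP) (i : GTAidx p) :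
    GTA p ρX ρP i ∈ SLFsub p := by
  rcases i with ⟨_, _⟩ | t
  · exact isSLF_chiOf _
  · exact isSLF_GOf hp hP (by lia) (by lia)

theorem GTA_chi_pos_casimirIdem (hp : 2 ≤ p) (hX : IsXRep p ρX) (k : Fin p) (j : ℤ) (f : ℂ[X]) :
    GTA p ρX ρP (.inl (true, k)) (casimirIdem p j f) =
      f.eval (casimirValue p (k + 1 : ℕ)) * weightMult p (k + 1) (q p ^ (k : ℤ)) (q p ^ j) := by
  have h := chiOf_casimirIdem hp (one_mul 1) (hX 1 (.inl rfl) (k + 1) (by lia) k.isLt) j f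
  simpa [GTA] using h

theorem GTA_chi_neg_casimirIdem (hp : 2 ≤ p) (hX : IsXRep p ρX) (k : Fin p) (j : ℤ) (f : ℂ[X]) :
    GTA p ρX ρP (.inl (false, k)) (casimirIdem p j f) =
      f.eval (casimirValue p (p - (k + 1) : ℕ)) *
        weightMult p (k + 1) (q p ^ (p + k : ℤ)) (q p ^ j) := by
  have h := chiOf_casimirIdem hp (by norm_num) (hX (-1) (.inr rfl) (k + 1) (by lia) k.isLt) j f
  have hvalue : -casimirValue p (k + 1 : ℕ) = casimirValue p (p - (k + 1) : ℕ) := by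
    rw [← neg_casimirValue_sub hp (p - (k + 1) : ℕ), Nat.cast_sub k.isLt, sub_sub_cancel]
  rw [neg_one_mul, neg_one_mul, hvalue, neg_q_zpow hp, Nat.cast_add, Nat.cast_one,
    add_sub_cancel_right] at h
  simpa [GTA] using h

theorem GTA_G_casimirIdem (hp : 2 ≤ p) (hP : IsPRep p ρP) (k : Fin (p - 1)) (j : ℤ) (f : ℂ[X]) :
    GTA p ρX ρP (.inr k) (casimirIdem p j f) =
      f.derivative.eval (casimirValue p (k + 1 : ℕ)) *
        weightMult p p (q p ^ (k : ℤ)) (q p ^ j) := by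
  rw [GTA, GOf_casimirIdem hp hP (by lia) (by lia), Nat.cast_add, Nat.cast_one,
    add_sub_cancel_right]

end BasisForms

section LinearIndependence

open Polynomial

variable {p : ℕ} {ρX : (α : ℂ) → (s : ℕ) → (Uq p →ₐ[ℂ] Matrix (Fin s) (Fin s) ℂ)}
  {ρP : (α : ℂ) → (s : ℕ) → (Uq p →ₐ[ℂ] Matrix (PIdx p s) (PIdx p s) ℂ)}

/-- The Hermite interpolation polynomial vanishing at `c_0, …, c_p`, with derivative `1` at `c_k`
and `0` at the other Casimir values. -/
def casimirHermite (p k : ℕ) : ℂ[X] := (X - C (casimirValue p k)) * casimirLagrange p k ^ 2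

theorem eval_casimirValue_casimirHermite (hp : 2 ≤ p) {k m : ℕ} (hk : k ≤ p) (hm : m ≤ p) :
    (casimirHermite p k).eval (casimirValue p m) = 0 := by
  rw [casimirHermite, eval_mul, eval_pow, eval_casimirValue_casimirLagrange hp hk hm]
  split_ifs with hmk <;> simp [hmk]

theorem eval_casimirValue_derivative_casimirHermite (hp : 2 ≤ p) {k m : ℕ} (hk : k ≤ p)
    (hm : m ≤ p) :
    (derivative (casimirHermite p k)).eval (casimirValue p m) = if m = k then 1 else 0 := by
  have hL := eval_casimirValue_casimirLagrange hp hk hm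
  simp only [casimirHermite, derivative_mul, derivative_X_sub_C, derivative_pow, eval_add,
    eval_mul, eval_pow, eval_one, eval_sub, eval_X, eval_C, hL]
  split_ifs with hmk <;> simp [hmk]

/-- Elements of `Ū_q` on which the GTA family is triangular with respect to `gtaRank`. -/
def dualElement (p : ℕ) : GTAidx p → Uq p
  | .inl (true, s) => casimirIdem p s (casimirLagrange p (s + 1))
  | .inl (false, s) => casimirIdem p (p + s) (casimirLagrange p (p - (s + 1)))
  | .inr t => casimirIdem p t (casimirHermite p (t + 1))

/-- The order `G < χ⁺ < χ⁻` on the GTA family. -/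
def gtaRank (p : ℕ) : GTAidx p → ℕ
  | .inl (true, _) => 1
  | .inl (false, _) => 2
  | .inr _ => 0

theorem GTA_dualElement_ne_zero (hp : 2 ≤ p) (hX : IsXRep p ρX) (hP : IsPRep p ρP)
    (i : GTAidx p) : GTA p ρX ρP i (dualElement p i) ≠ 0 := by
  rcases i with ⟨_ | _, s⟩ | t
  · rw [dualElement, GTA_chi_neg_casimirIdem hp hX,
      eval_casimirValue_casimirLagrange hp (by lia) (by lia), if_pos rfl, one_mul]
    exact weightMult_self_ne_zero (by lia) _
  · rw [dualElement, GTA_chi_pos_casimirIdem hp hX,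
      eval_casimirValue_casimirLagrange hp (by lia) (by lia), if_pos rfl, one_mul]
    exact weightMult_self_ne_zero (by lia) _
  · rw [dualElement, GTA_G_casimirIdem hp hP,
      eval_casimirValue_derivative_casimirHermite hp (by lia) (by lia), if_pos rfl, one_mul]
    exact weightMult_self_ne_zero (by lia) _

theorem GTA_chi_neg_dualElement_chi_pos (hp : 2 ≤ p) (hX : IsXRep p ρX) (s k : Fin p) :
    GTA p ρX ρP (.inl (false, k)) (dualElement p (.inl (true, s))) = 0 := by
  rw [dualElement, GTA_chi_neg_casimirIdem hp hX,
    eval_casimirValue_casimirLagrange hp (by lia) (by lia)]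
  split_ifs with hks
  · rw [one_mul]
    refine Finset.sum_eq_zero fun i hi => if_neg fun hw => ?_
    rw [← zpow_add₀ (q_ne_zero p), q_zpow_eq_zpow_iff hp] at hw
    have hi' := Finset.mem_range.mp hi
    have hle := Int.le_of_dvd (by lia) hw
    lia
  · rw [zero_mul]

theorem GTA_dualElement_eq_zero (hp : 2 ≤ p) (hX : IsXRep p ρX) (hP : IsPRep p ρP)
    {i j : GTAidx p} (hij : i ≠ j) (hrank : gtaRank p i ≤ gtaRank p j) :
    GTA p ρX ρP j (dualElement p i) = 0 := by
  rcases i with ⟨_ | _, s⟩ | t <;> rcases j with ⟨_ | _, k⟩ | k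
  · have hks : p - (k + 1 : ℕ) ≠ p - (s + 1 : ℕ) := fun h => hij (by congr; lia)
    rw [dualElement, GTA_chi_neg_casimirIdem hp hX,
      eval_casimirValue_casimirLagrange hp (by lia) (by lia), if_neg hks, zero_mul]
  · simp [gtaRank] at hrank
  · simp [gtaRank] at hrank
  · exact GTA_chi_neg_dualElement_chi_pos hp hX s k
  · have hks : (k + 1 : ℕ) ≠ s + 1 := fun h => hij (by congr; lia)
    rw [dualElement, GTA_chi_pos_casimirIdem hp hX,
      eval_casimirValue_casimirLagrange hp (by lia) (by lia), if_neg hks, zero_mul]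
  · simp [gtaRank] at hrank
  · rw [dualElement, GTA_chi_neg_casimirIdem hp hX,
      eval_casimirValue_casimirHermite hp (by lia) (by lia), zero_mul]
  · rw [dualElement, GTA_chi_pos_casimirIdem hp hX,
      eval_casimirValue_casimirHermite hp (by lia) (by lia), zero_mul]
  · have hkt : (k + 1 : ℕ) ≠ t + 1 := fun h => hij (by congr; lia)
    rw [dualElement, GTA_G_casimirIdem hp hP,
      eval_casimirValue_derivative_casimirHermite hp (by lia) (by lia), if_neg hkt, zero_mul]

theorem linearIndependent_GTA (hp : 2 ≤ p) (hX : IsXRep p ρX) (hP : IsPRep p ρP) :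
    LinearIndependent ℂ (GTA p ρX ρP) :=
  linearIndependent_of_triangular_eval (dualElement p) (gtaRank p)
    (GTA_dualElement_ne_zero hp hX hP) fun _ _ => GTA_dualElement_eq_zero hp hX hP

end LinearIndependence

/-- the `3p - 1` symmetric linear forms `χ^±_s` (`1 ≤ s ≤ p`) and
`G_{s'}` (`1 ≤ s' ≤ p-1`) form a basis of `SLF(Ū_q)`; in particular
`dim SLF(Ū_q) = 3p - 1`. -/
theorem statement_6 (p : ℕ) (hp : 2 ≤ p)
    (ρX : (α : ℂ) → (s : ℕ) → (Uq p →ₐ[ℂ] Matrix (Fin s) (Fin s) ℂ))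
    (hX : IsXRep p ρX)
    (ρP : (α : ℂ) → (s : ℕ) → (Uq p →ₐ[ℂ] Matrix (PIdx p s) (PIdx p s) ℂ))
    (hP : IsPRep p ρP) :
    (∀ idx : GTAidx p, GTA p ρX ρP idx ∈ SLFsub p)
    ∧ LinearIndependent ℂ (GTA p ρX ρP)
    ∧ Submodule.span ℂ (Set.range (GTA p ρX ρP)) = SLFsub p
    ∧ Module.finrank ℂ ↥(SLFsub p) = 3 * p - 1 := by
  have hmem := GTA_mem_SLFsub hp ρX hP
  have hindep := linearIndependent_GTA hp hX hP
  obtain ⟨hspan, hrank⟩ := span_range_eq_and_finrank_eq_card hmem hindep (testElement p)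
    fun φ hφ => eq_zero_of_map_testElement_eq_zero hp hφ
  refine ⟨hmem, hindep, hspan, hrank.trans ?_⟩
  simp only [GTAidx, Fintype.card_sum, Fintype.card_prod, Fintype.card_bool, Fintype.card_fin]
  lia

end Uqsl2
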